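/- Assume there exists a feasible flow with the same pattern as A'. Then F has a fixed point p* ∈ ℝⁿ, which is unique up to addition of a constant multiple of the all-ones vector, and for every initial point p⁰ ∈ ℝⁿ the iterates p^{k+1} = F(p^k) converge to a fixed point p̄ of F with limsup_{k→∞} ‖p^k − p̄‖^{1/k} ≤ ρ, where ρ = max{ |λ| : λ a complex eigenvalue of ∇F(p*), λ ≠ 1 } < 1; consequently the effective HOTS vectors e^{p^k} converge linearly at rate ρ to a HOTS vector e^{p̄}, which is unique up to a multiplicative constant. -/

import Mathlib

open BigOperators Filter Matrix

/-- `σ(p) = Σ_{i,j} A_{ij} e^{p_i − p_j}`. -/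
noncomputable def sigmaFun {n : ℕ} (A : Matrix (Fin n) (Fin n) ℝ) (p : Fin n → ℝ) : ℝ :=
  ∑ i, ∑ j, A i j * Real.exp (p i - p j)

/-- The reduced effective HOTS fixed-point map `F`, with `γ = (1−α)/(2α−1)`. -/
noncomputable def effHotsMap {n : ℕ} (A : Matrix (Fin n) (Fin n) ℝ) (α : ℝ)
    (p : Fin n → ℝ) : Fin n → ℝ :=
  fun k =>
    (1 / 2) * Real.log ((∑ i, A i k * Real.exp (p i))
      + (1 - α) / (2 * α - 1) * sigmaFun A p / ∑ j, Real.exp (-(p j)))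
    - (1 / 2) * Real.log ((∑ j, A k j * Real.exp (-(p j)))
      + (1 - α) / (2 * α - 1) * sigmaFun A p / ∑ i, Real.exp (p i))

/-- The augmented `(n+1)×(n+1)` matrix `A'`. -/
def augMatrix {n : ℕ} (A : Matrix (Fin n) (Fin n) ℝ) :
    Matrix (Fin (n + 1)) (Fin (n + 1)) ℝ :=
  fun i j =>
    if hi : (i : ℕ) < n then
      if hj : (j : ℕ) < n then A ⟨i, hi⟩ ⟨j, hj⟩ else 1
    else
      if (j : ℕ) < n then 1 else 0

/-- A feasible flow with the same pattern as `A'`. -/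
def FeasibleFlow {n : ℕ} (A : Matrix (Fin n) (Fin n) ℝ) (α : ℝ)
    (ρ : Matrix (Fin (n + 1)) (Fin (n + 1)) ℝ) : Prop :=
  (∀ i j, 0 < augMatrix A i j → 0 < ρ i j) ∧
  (∀ i j, augMatrix A i j = 0 → ρ i j = 0) ∧
  (∑ i, ∑ j, ρ i j = 1) ∧
  (∀ i, ∑ j, ρ i j = ∑ j, ρ j i) ∧
  (∑ j : Fin n, ρ (Fin.last n) j.castSucc = 1 - α) ∧
  (∑ i : Fin n, ρ i.castSucc (Fin.last n) = 1 - α)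

/-- The Jacobian matrix of a map `ℝⁿ → ℝⁿ` at a point. -/
noncomputable def jacMatrix {n : ℕ} (F : (Fin n → ℝ) → (Fin n → ℝ)) (p : Fin n → ℝ) :
    Matrix (Fin n) (Fin n) ℝ :=
  LinearMap.toMatrix' (fderiv ℝ F p : (Fin n → ℝ) →ₗ[ℝ] (Fin n → ℝ))

/-- `ρ = max{|λ| : λ eigenvalue of M, λ ≠ 1}`. -/
noncomputable def secondEigRadius {n : ℕ} (M : Matrix (Fin n) (Fin n) ℝ) : ℝ :=
  sSup {r : ℝ | ∃ μ : ℂ, μ ∈ spectrum ℂ (M.map (Complex.ofReal)) ∧ μ ≠ 1 ∧ r = ‖μ‖}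


namespace EffHots

noncomputable def gam (α : ℝ) : ℝ := (1 - α) / (2 * α - 1)

noncomputable def Sp {n : ℕ} (p : Fin n → ℝ) : ℝ := ∑ i, Real.exp (p i)

noncomputable def Sm {n : ℕ} (p : Fin n → ℝ) : ℝ := ∑ i, Real.exp (-(p i))

/-- weighted matrix `a_{ij} = A_{ij} e^{p_i-p_j}` -/
noncomputable def aa {n : ℕ} (A : Matrix (Fin n) (Fin n) ℝ) (p : Fin n → ℝ) (i j : Fin n) : ℝ :=
  A i j * Real.exp (p i - p j)

/-- `e^{p_k} D_k` -/
noncomputable def UU {n : ℕ} (A : Matrix (Fin n) (Fin n) ℝ) (α : ℝ) (p : Fin n → ℝ)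
    (k : Fin n) : ℝ :=
  (∑ j, aa A p k j) + gam α * sigmaFun A p * (Real.exp (p k) / Sp p)

/-- `e^{-p_k} N_k` -/
noncomputable def VV {n : ℕ} (A : Matrix (Fin n) (Fin n) ℝ) (α : ℝ) (p : Fin n → ℝ)
    (k : Fin n) : ℝ :=
  (∑ i, aa A p i k) + gam α * sigmaFun A p * (Real.exp (-(p k)) / Sm p)

/-- Lyapunov function -/
noncomputable def phi {n : ℕ} (A : Matrix (Fin n) (Fin n) ℝ) (α : ℝ) (p : Fin n → ℝ) : ℝ :=
  Real.log (sigmaFun A p) + gam α * (Real.log (Sp p) + Real.log (Sm p))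

lemma gam_pos {α : ℝ} (h1 : 1 / 2 < α) (h2 : α < 1) : 0 < gam α := by
  unfold gam
  apply div_pos <;> linarith

lemma exists_pos {n : ℕ} {A : Matrix (Fin n) (Fin n) ℝ} (hA : ∀ i j, 0 ≤ A i j) (hA0 : A ≠ 0) :
    ∃ i j, 0 < A i j := by
  by_contra! h
  apply hA0
  ext i j
  exact le_antisymm (h i j) (hA i j)

lemma aa_nonneg {n : ℕ} {A : Matrix (Fin n) (Fin n) ℝ} (hA : ∀ i j, 0 ≤ A i j)
    (p : Fin n → ℝ) (i j : Fin n) : 0 ≤ aa A p i j :=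
  mul_nonneg (hA i j) (Real.exp_pos _).le

lemma le_sigma {n : ℕ} {A : Matrix (Fin n) (Fin n) ℝ} (hA : ∀ i j, 0 ≤ A i j)
    (p : Fin n → ℝ) (i j : Fin n) : aa A p i j ≤ sigmaFun A p := by
  have h1 : aa A p i j ≤ ∑ j, aa A p i j :=
    Finset.single_le_sum (f := fun j => aa A p i j) (fun j _ => aa_nonneg hA p i j)
      (Finset.mem_univ j)
  have h2 : ∑ j, aa A p i j ≤ ∑ i, ∑ j, aa A p i j :=
    Finset.single_le_sum (f := fun i => ∑ j, aa A p i j)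
      (fun i _ => Finset.sum_nonneg fun j _ => aa_nonneg hA p i j) (Finset.mem_univ i)
  exact h1.trans h2

lemma sigma_pos {n : ℕ} {A : Matrix (Fin n) (Fin n) ℝ} (hA : ∀ i j, 0 ≤ A i j) (hA0 : A ≠ 0)
    (p : Fin n → ℝ) : 0 < sigmaFun A p := by
  obtain ⟨i, j, hij⟩ := exists_pos hA hA0
  exact lt_of_lt_of_le (mul_pos hij (Real.exp_pos _)) (le_sigma hA p i j)

lemma nonempty_fin {n : ℕ} {A : Matrix (Fin n) (Fin n) ℝ} (hA0 : A ≠ 0) : Nonempty (Fin n) := by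
  by_contra h
  rw [not_nonempty_iff] at h
  apply hA0
  ext i j
  exact (h.false i).elim

lemma Sp_pos {n : ℕ} [Nonempty (Fin n)] (p : Fin n → ℝ) : 0 < Sp p :=
  Finset.sum_pos (fun _ _ => Real.exp_pos _) Finset.univ_nonempty

lemma Sm_pos {n : ℕ} [Nonempty (Fin n)] (p : Fin n → ℝ) : 0 < Sm p :=
  Finset.sum_pos (fun _ _ => Real.exp_pos _) Finset.univ_nonempty

lemma le_log_Sp {n : ℕ} (p : Fin n → ℝ) (i : Fin n) : p i ≤ Real.log (Sp p) := by
  have : Nonempty (Fin n) := ⟨i⟩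
  rw [Real.le_log_iff_exp_le (Sp_pos p)]
  exact Finset.single_le_sum (f := fun i => Real.exp (p i)) (fun j _ => (Real.exp_pos _).le)
      (Finset.mem_univ i)

lemma le_log_Sm {n : ℕ} (p : Fin n → ℝ) (i : Fin n) : -p i ≤ Real.log (Sm p) := by
  have : Nonempty (Fin n) := ⟨i⟩
  rw [Real.le_log_iff_exp_le (Sm_pos p)]
  exact Finset.single_le_sum (f := fun i => Real.exp (-(p i))) (fun j _ => (Real.exp_pos _).le)
      (Finset.mem_univ i)

lemma UU_pos {n : ℕ} {A : Matrix (Fin n) (Fin n) ℝ} (hA : ∀ i j, 0 ≤ A i j) (hA0 : A ≠ 0)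
    {α : ℝ} (h1 : 1 / 2 < α) (h2 : α < 1) (p : Fin n → ℝ) (k : Fin n) : 0 < UU A α p k := by
  have := nonempty_fin hA0
  have := mul_pos (mul_pos (gam_pos h1 h2) (sigma_pos hA hA0 p))
    (div_pos (Real.exp_pos (p k)) (Sp_pos p))
  have := Finset.sum_nonneg (fun j (_ : j ∈ Finset.univ) => aa_nonneg hA p k j)
  unfold UU
  linarith

lemma VV_pos {n : ℕ} {A : Matrix (Fin n) (Fin n) ℝ} (hA : ∀ i j, 0 ≤ A i j) (hA0 : A ≠ 0)
    {α : ℝ} (h1 : 1 / 2 < α) (h2 : α < 1) (p : Fin n → ℝ) (k : Fin n) : 0 < VV A α p k := by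
  have := nonempty_fin hA0
  have := mul_pos (mul_pos (gam_pos h1 h2) (sigma_pos hA hA0 p))
    (div_pos (Real.exp_pos (-(p k))) (Sm_pos p))
  have := Finset.sum_nonneg (fun j (_ : j ∈ Finset.univ) => aa_nonneg hA p j k)
  unfold VV
  linarith

lemma den_eq {n : ℕ} (A : Matrix (Fin n) (Fin n) ℝ) (α : ℝ) (p : Fin n → ℝ) (k : Fin n) :
    (∑ j, A k j * Real.exp (-(p j))) + (1 - α) / (2 * α - 1) * sigmaFun A p / ∑ i, Real.exp (p i)
      = Real.exp (-(p k)) * UU A α p k := by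
  have h : Real.exp (-(p k)) * Real.exp (p k) = 1 := by rw [← Real.exp_add]; simp
  unfold UU aa gam Sp
  rw [mul_add, Finset.mul_sum]
  congr 1
  · apply Finset.sum_congr rfl
    intro j _
    rw [sub_eq_add_neg, Real.exp_add]
    linear_combination (-(A k j * Real.exp (-(p j)))) * h
  · linear_combination (-((1 - α) / (2 * α - 1) * sigmaFun A p / ∑ i, Real.exp (p i))) * h

lemma num_eq {n : ℕ} (A : Matrix (Fin n) (Fin n) ℝ) (α : ℝ) (p : Fin n → ℝ) (k : Fin n) :
    (∑ i, A i k * Real.exp (p i)) + (1 - α) / (2 * α - 1) * sigmaFun A p / ∑ i, Real.exp (-(p i))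
      = Real.exp (p k) * VV A α p k := by
  have h : Real.exp (p k) * Real.exp (-(p k)) = 1 := by rw [← Real.exp_add]; simp
  unfold VV aa gam Sm
  rw [mul_add, Finset.mul_sum]
  congr 1
  · apply Finset.sum_congr rfl
    intro j _
    rw [sub_eq_add_neg, Real.exp_add]
    linear_combination (-(A j k * Real.exp ((p j)))) * h
  · linear_combination (-((1 - α) / (2 * α - 1) * sigmaFun A p / ∑ i, Real.exp (-(p i)))) * h

lemma map_eq {n : ℕ} {A : Matrix (Fin n) (Fin n) ℝ} (hA : ∀ i j, 0 ≤ A i j) (hA0 : A ≠ 0)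
    {α : ℝ} (h1 : 1 / 2 < α) (h2 : α < 1) (p : Fin n → ℝ) (k : Fin n) :
    effHotsMap A α p k = p k + 1 / 2 * (Real.log (VV A α p k) - Real.log (UU A α p k)) := by
  unfold effHotsMap
  rw [den_eq, num_eq, Real.log_mul (Real.exp_pos _).ne' (VV_pos hA hA0 h1 h2 p k).ne',
    Real.log_mul (Real.exp_pos _).ne' (UU_pos hA hA0 h1 h2 p k).ne', Real.log_exp, Real.log_exp]
  ring

lemma fixed_iff {n : ℕ} {A : Matrix (Fin n) (Fin n) ℝ} (hA : ∀ i j, 0 ≤ A i j) (hA0 : A ≠ 0)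
    {α : ℝ} (h1 : 1 / 2 < α) (h2 : α < 1) (p : Fin n → ℝ) (hp : effHotsMap A α p = p)
    (k : Fin n) : VV A α p k = UU A α p k := by
  have h := congrFun hp k
  rw [map_eq hA hA0 h1 h2] at h
  exact Real.log_injOn_pos (VV_pos hA hA0 h1 h2 p k) (UU_pos hA hA0 h1 h2 p k) (by linarith)

/-- `V e^{-2d} = U`, `U e^{2d} = V` for `d = F p - p`. -/
lemma step_eq {n : ℕ} {A : Matrix (Fin n) (Fin n) ℝ} (hA : ∀ i j, 0 ≤ A i j) (hA0 : A ≠ 0)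
    {α : ℝ} (h1 : 1 / 2 < α) (h2 : α < 1) (p : Fin n → ℝ) (k : Fin n) :
    UU A α p k * Real.exp (2 * (effHotsMap A α p k - p k)) = VV A α p k ∧
    VV A α p k * Real.exp (-(2 * (effHotsMap A α p k - p k))) = UU A α p k := by
  have hU := UU_pos hA hA0 h1 h2 p k
  have hV := VV_pos hA hA0 h1 h2 p k
  have e1 : 2 * (effHotsMap A α p k - p k) = Real.log (VV A α p k) - Real.log (UU A α p k) := by
    rw [map_eq hA hA0 h1 h2]; ring
  rw [e1, Real.exp_neg, Real.exp_sub, Real.exp_log hU, Real.exp_log hV]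
  constructor <;> field_simp

lemma sigma_shift {n : ℕ} (A : Matrix (Fin n) (Fin n) ℝ) (p : Fin n → ℝ) (c : ℝ) :
    sigmaFun A (p + fun _ => c) = sigmaFun A p := by
  unfold sigmaFun
  simp

lemma Sp_shift {n : ℕ} (p : Fin n → ℝ) (c : ℝ) :
    Sp (p + fun _ => c) = Real.exp c * Sp p := by
  unfold Sp
  rw [Finset.mul_sum]
  apply Finset.sum_congr rfl
  intro i _
  rw [← Real.exp_add]; congr 1; simp [add_comm]

lemma Sm_shift {n : ℕ} (p : Fin n → ℝ) (c : ℝ) :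
    Sm (p + fun _ => c) = Real.exp (-c) * Sm p := by
  unfold Sm
  rw [Finset.mul_sum]
  apply Finset.sum_congr rfl
  intro i _
  rw [← Real.exp_add]; congr 1; simp [add_comm]

lemma map_shift {n : ℕ} {A : Matrix (Fin n) (Fin n) ℝ} (hA : ∀ i j, 0 ≤ A i j) (hA0 : A ≠ 0)
    {α : ℝ} (h1 : 1 / 2 < α) (h2 : α < 1) (p : Fin n → ℝ) (c : ℝ) :
    effHotsMap A α (p + fun _ => c) = effHotsMap A α p + fun _ => c := by
  have := nonempty_fin hA0
  have hu : ∀ k, UU A α (p + fun _ => c) k = UU A α p k := by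
    intro k
    unfold UU aa
    rw [sigma_shift, Sp_shift]
    simp [Real.exp_add]
    left
    have := (Sp_pos p).ne'
    have := (Real.exp_pos c).ne'
    field_simp
  have hv : ∀ k, VV A α (p + fun _ => c) k = VV A α p k := by
    intro k
    unfold VV aa
    rw [sigma_shift, Sm_shift]
    simp [Real.exp_add]
    left
    have := (Sm_pos p).ne'
    have := (Real.exp_pos (-c)).ne'
    field_simp
  ext k
  rw [map_eq hA hA0 h1 h2, hu, hv, Pi.add_apply, Pi.add_apply, map_eq hA hA0 h1 h2]
  ring

lemma phi_shift {n : ℕ} [Nonempty (Fin n)] (A : Matrix (Fin n) (Fin n) ℝ) (α : ℝ)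
    (p : Fin n → ℝ) (c : ℝ) :
    phi A α (p + fun _ => c) = phi A α p := by
  unfold phi
  rw [sigma_shift, Sp_shift, Sm_shift, Real.log_mul (Real.exp_pos _).ne' (Sp_pos p).ne',
    Real.log_mul (Real.exp_pos _).ne' (Sm_pos p).ne', Real.log_exp, Real.log_exp]
  ring

lemma sum_UU {n : ℕ} [Nonempty (Fin n)] (A : Matrix (Fin n) (Fin n) ℝ) (α : ℝ) (p : Fin n → ℝ) :
    ∑ k, UU A α p k = sigmaFun A p + gam α * sigmaFun A p := by
  unfold UU
  rw [Finset.sum_add_distrib, ← Finset.mul_sum, ← Finset.sum_div]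
  have : (∑ i, Real.exp (p i)) / Sp p = 1 := div_self (Sp_pos p).ne'
  rw [this, mul_one]; rfl

lemma sum_VV {n : ℕ} [Nonempty (Fin n)] (A : Matrix (Fin n) (Fin n) ℝ) (α : ℝ) (p : Fin n → ℝ) :
    ∑ k, VV A α p k = sigmaFun A p + gam α * sigmaFun A p := by
  unfold VV
  rw [Finset.sum_add_distrib, ← Finset.mul_sum, ← Finset.sum_div, Finset.sum_comm]
  have : (∑ i, Real.exp (-(p i))) / Sm p = 1 := div_self (Sm_pos p).ne'
  rw [this, mul_one]; rfl

lemma exp_sq_le (d : ℝ) : 2 * Real.exp d ≤ Real.exp (2 * d) + 1 := by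
  have : Real.exp (2 * d) = Real.exp d * Real.exp d := by rw [← Real.exp_add]; ring_nf
  nlinarith [sq_nonneg (Real.exp d - 1)]

lemma exp_sq_lt (d : ℝ) (hd : d ≠ 0) : 2 * Real.exp d < Real.exp (2 * d) + 1 := by
  have : Real.exp (2 * d) = Real.exp d * Real.exp d := by rw [← Real.exp_add]; ring_nf
  have h : Real.exp d - 1 ≠ 0 := by
    intro h
    exact hd ((Real.exp_eq_one_iff d).1 (by linarith))
  nlinarith [sq_pos_of_ne_zero h]

/-- majorization -/
lemma log_major {x y : ℝ} (hx : 0 < x) (hy : 0 < y) : Real.log y ≤ Real.log x + (y / x - 1) := by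
  have := Real.log_le_sub_one_of_pos (div_pos hy hx)
  rw [Real.log_div hy.ne' hx.ne'] at this
  linarith

lemma lyapunov {n : ℕ} {A : Matrix (Fin n) (Fin n) ℝ} (hA : ∀ i j, 0 ≤ A i j) (hA0 : A ≠ 0)
    {α : ℝ} (h1 : 1 / 2 < α) (h2 : α < 1) (p : Fin n → ℝ) (hp : effHotsMap A α p ≠ p) :
    phi A α (effHotsMap A α p) < phi A α p := by
  have := nonempty_fin hA0
  set q := effHotsMap A α p with hq
  have hs := sigma_pos hA hA0 p
  have hsq := sigma_pos hA hA0 q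
  have hg := gam_pos h1 h2
  obtain ⟨d, hd⟩ : ∃ d : Fin n → ℝ, ∀ k, d k = q k - p k := ⟨fun k => q k - p k, fun _ => rfl⟩
  have hst := fun k => step_eq hA hA0 h1 h2 p k
  simp only [← hq, ← hd] at hst
  have b1 : 2 * sigmaFun A q ≤ ∑ k, (Real.exp (2 * d k) * ∑ j, aa A p k j)
      + ∑ k, (Real.exp (-(2 * d k)) * ∑ i, aa A p i k) := by
    have e : ∑ k, (Real.exp (-(2 * d k)) * ∑ i, aa A p i k)
        = ∑ i, ∑ k, (Real.exp (-(2 * d k)) * aa A p i k) := by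
      simp_rw [Finset.mul_sum]
      exact Finset.sum_comm
    rw [e]
    simp_rw [Finset.mul_sum]
    rw [← Finset.sum_add_distrib]
    unfold sigmaFun
    rw [Finset.mul_sum]
    apply Finset.sum_le_sum
    intro i _
    rw [← Finset.sum_add_distrib, Finset.mul_sum]
    apply Finset.sum_le_sum
    intro j _
    have e1 : Real.exp (q i - q j) = Real.exp (p i - p j) * (Real.exp (d i) * Real.exp (-d j)) := by
      rw [← Real.exp_add, ← Real.exp_add]; congr 1; rw [hd, hd]; ring
    have e2 : Real.exp (2 * d i) = Real.exp (d i) * Real.exp (d i) := by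
      rw [← Real.exp_add]; ring_nf
    have e3 : Real.exp (-(2 * d j)) = Real.exp (-d j) * Real.exp (-d j) := by
      rw [← Real.exp_add]; ring_nf
    have := mul_nonneg (aa_nonneg hA p i j) (sq_nonneg (Real.exp (d i) - Real.exp (-d j)))
    rw [e1, e2, e3]
    unfold aa at *
    nlinarith
  have b2 : 2 * Sp q < ∑ k, Real.exp (2 * d k) * Real.exp (p k) + Sp p := by
    unfold Sp
    rw [Finset.mul_sum, ← Finset.sum_add_distrib]
    have e1 : ∀ k, Real.exp (q k) = Real.exp (p k) * Real.exp (d k) := by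
      intro k
      rw [← Real.exp_add]; congr 1; rw [hd]; ring
    apply Finset.sum_lt_sum
    · intro k _
      rw [e1]
      nlinarith [exp_sq_le (d k), Real.exp_pos (p k)]
    · obtain ⟨k, hk⟩ := Function.ne_iff.1 hp
      refine ⟨k, Finset.mem_univ _, ?_⟩
      rw [e1]
      nlinarith [exp_sq_lt (d k) (by rw [hd]; exact sub_ne_zero.2 hk), Real.exp_pos (p k)]
  have b3 : 2 * Sm q ≤ ∑ k, Real.exp (-(2 * d k)) * Real.exp (-(p k)) + Sm p := by
    unfold Sm
    rw [Finset.mul_sum, ← Finset.sum_add_distrib]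
    have e1 : ∀ k, Real.exp (-(q k)) = Real.exp (-(p k)) * Real.exp (-d k) := by
      intro k
      rw [← Real.exp_add]; congr 1; rw [hd]; ring
    apply Finset.sum_le_sum
    intro k _
    rw [e1]
    have := exp_sq_le (-d k)
    rw [mul_neg] at this
    nlinarith [Real.exp_pos (-(p k))]
  have c1 : ∑ k, UU A α p k * Real.exp (2 * d k)
      = ∑ k, (Real.exp (2 * d k) * ∑ j, aa A p k j)
        + gam α * sigmaFun A p / Sp p * ∑ k, Real.exp (2 * d k) * Real.exp (p k) := by
    rw [Finset.mul_sum, ← Finset.sum_add_distrib]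
    apply Finset.sum_congr rfl
    intro k _
    unfold UU
    ring
  have c2 : ∑ k, VV A α p k * Real.exp (-(2 * d k))
      = ∑ k, (Real.exp (-(2 * d k)) * ∑ i, aa A p i k)
        + gam α * sigmaFun A p / Sm p * ∑ k, Real.exp (-(2 * d k)) * Real.exp (-(p k)) := by
    rw [Finset.mul_sum, ← Finset.sum_add_distrib]
    apply Finset.sum_congr rfl
    intro k _
    unfold VV
    ring
  simp_rw [(hst _).1] at c1
  simp_rw [(hst _).2] at c2
  rw [sum_VV] at c1
  rw [sum_UU] at c2
  have hSp := Sp_pos p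
  have hSm := Sm_pos p
  have t2 : gam α * sigmaFun A p / Sp p * (2 * Sp q)
      < gam α * sigmaFun A p / Sp p * (∑ k, Real.exp (2 * d k) * Real.exp (p k) + Sp p) :=
    mul_lt_mul_of_pos_left b2 (by positivity)
  have t3 : gam α * sigmaFun A p / Sm p * (2 * Sm q)
      ≤ gam α * sigmaFun A p / Sm p * (∑ k, Real.exp (-(2 * d k)) * Real.exp (-(p k)) + Sm p) :=
    mul_le_mul_of_nonneg_left b3 (by positivity)
  have u2 : gam α * sigmaFun A p / Sp p * Sp p = gam α * sigmaFun A p := by field_simp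
  have u3 : gam α * sigmaFun A p / Sm p * Sm p = gam α * sigmaFun A p := by field_simp
  rw [mul_add, u2] at t2
  rw [mul_add, u3] at t3
  have key : sigmaFun A q + gam α * sigmaFun A p / Sp p * Sp q
      + gam α * sigmaFun A p / Sm p * Sm q < sigmaFun A p + 2 * (gam α * sigmaFun A p) := by
    linarith
  have l1 := log_major hs hsq
  have l2 := mul_le_mul_of_nonneg_left (log_major hSp (Sp_pos q)) hg.le
  have l3 := mul_le_mul_of_nonneg_left (log_major hSm (Sm_pos q)) hg.le
  have key2 : sigmaFun A q / sigmaFun A p + gam α * (Sp q / Sp p)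
      + gam α * (Sm q / Sm p) < 1 + 2 * gam α := by
    have k1 : sigmaFun A p * (sigmaFun A q / sigmaFun A p) = sigmaFun A q := by
      field_simp
    apply lt_of_mul_lt_mul_left _ hs.le
    calc sigmaFun A p * (sigmaFun A q / sigmaFun A p + gam α * (Sp q / Sp p)
          + gam α * (Sm q / Sm p))
        = sigmaFun A p * (sigmaFun A q / sigmaFun A p) + gam α * sigmaFun A p / Sp p * Sp q
          + gam α * sigmaFun A p / Sm p * Sm q := by ring
      _ < sigmaFun A p + 2 * (gam α * sigmaFun A p) := by rw [k1]; exact key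
      _ = sigmaFun A p * (1 + 2 * gam α) := by ring
  unfold phi
  linarith

lemma lyapunov_le {n : ℕ} {A : Matrix (Fin n) (Fin n) ℝ} (hA : ∀ i j, 0 ≤ A i j) (hA0 : A ≠ 0)
    {α : ℝ} (h1 : 1 / 2 < α) (h2 : α < 1) (p : Fin n → ℝ) :
    phi A α (effHotsMap A α p) ≤ phi A α p := by
  by_cases h : effHotsMap A α p = p
  · rw [h]
  · exact (lyapunov hA hA0 h1 h2 p h).le

/-- Jensen for log-sum-exp. -/
lemma lse_ge {ι : Type*} [Fintype ι] (a d : ι → ℝ) (ha : ∀ i, 0 ≤ a i) (hs : 0 < ∑ i, a i) :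
    Real.log (∑ i, a i) + (∑ i, a i * d i) / (∑ i, a i) ≤ Real.log (∑ i, a i * Real.exp (d i)) := by
  set S := ∑ i, a i with hS
  set m := (∑ i, a i * d i) / S with hm
  have hmS : ∑ i, a i * d i = m * S := by rw [hm]; field_simp
  have h : S * Real.exp m ≤ ∑ i, a i * Real.exp (d i) := by
    calc S * Real.exp m = ∑ i, a i * (Real.exp m * (1 + (d i - m))) := by
          have : ∀ i, a i * (Real.exp m * (1 + (d i - m)))
            = Real.exp m * (1 - m) * a i + Real.exp m * (a i * d i) := by intro i; ring
          simp_rw [this]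
          rw [Finset.sum_add_distrib, ← Finset.mul_sum, ← Finset.mul_sum, hmS, ← hS]
          ring
      _ ≤ _ := by
          apply Finset.sum_le_sum
          intro i _
          apply mul_le_mul_of_nonneg_left _ (ha i)
          have := Real.add_one_le_exp (d i - m)
          have e : Real.exp (d i) = Real.exp m * Real.exp (d i - m) := by
            rw [← Real.exp_add]; ring_nf
          rw [e]
          apply mul_le_mul_of_nonneg_left _ (Real.exp_pos _).le
          linarith
  rw [Real.le_log_iff_exp_le (lt_of_lt_of_le (mul_pos hs (Real.exp_pos _)) h), Real.exp_add,
    Real.exp_log hs]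
  exact h

lemma lse_gt {ι : Type*} [Fintype ι] [Nonempty ι] (a d : ι → ℝ) (ha : ∀ i, 0 < a i)
    (hd : ¬ ∃ c, ∀ i, d i = c) :
    Real.log (∑ i, a i) + (∑ i, a i * d i) / (∑ i, a i) < Real.log (∑ i, a i * Real.exp (d i)) := by
  have hs : 0 < ∑ i, a i := Finset.sum_pos (fun i _ => ha i) Finset.univ_nonempty
  set S := ∑ i, a i with hS
  set m := (∑ i, a i * d i) / S with hm
  have hmS : ∑ i, a i * d i = m * S := by rw [hm]; field_simp
  have h : S * Real.exp m < ∑ i, a i * Real.exp (d i) := by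
    calc S * Real.exp m = ∑ i, a i * (Real.exp m * (1 + (d i - m))) := by
          have : ∀ i, a i * (Real.exp m * (1 + (d i - m)))
            = Real.exp m * (1 - m) * a i + Real.exp m * (a i * d i) := by intro i; ring
          simp_rw [this]
          rw [Finset.sum_add_distrib, ← Finset.mul_sum, ← Finset.mul_sum, hmS, ← hS]
          ring
      _ < _ := by
          have e : ∀ i, Real.exp (d i) = Real.exp m * Real.exp (d i - m) := by
            intro i
            rw [← Real.exp_add]; ring_nf
          apply Finset.sum_lt_sum
          · intro i _
            apply mul_le_mul_of_nonneg_left _ (ha i).le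
            have := Real.add_one_le_exp (d i - m)
            rw [e]
            apply mul_le_mul_of_nonneg_left _ (Real.exp_pos _).le
            linarith
          · push Not at hd
            obtain ⟨i, hi⟩ := hd m
            refine ⟨i, Finset.mem_univ _, ?_⟩
            apply mul_lt_mul_of_pos_left _ (ha i)
            have := Real.add_one_lt_exp (sub_ne_zero.2 hi)
            rw [e]
            apply mul_lt_mul_of_pos_left _ (Real.exp_pos _)
            linarith
  rw [Real.lt_log_iff_exp_lt (lt_trans (mul_pos hs (Real.exp_pos _)) h), Real.exp_add,
    Real.exp_log hs]
  exact h

lemma sum_diff {n : ℕ} (a : Fin n → Fin n → ℝ) (x : Fin n → ℝ) :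
    ∑ i, ∑ j, a i j * (x i - x j) = ∑ k, x k * (∑ j, a k j) - ∑ k, x k * (∑ i, a i k) := by
  have e : ∑ k, x k * (∑ i, a i k) = ∑ i, ∑ k, x k * a i k := by
    simp_rw [Finset.mul_sum]
    exact Finset.sum_comm
  rw [e]
  simp_rw [Finset.mul_sum]
  simp_rw [← Finset.sum_sub_distrib]
  apply Finset.sum_congr rfl
  intro i _
  apply Finset.sum_congr rfl
  intro j _
  ring

lemma phi_gt {n : ℕ} {A : Matrix (Fin n) (Fin n) ℝ} (hA : ∀ i j, 0 ≤ A i j) (hA0 : A ≠ 0)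
    {α : ℝ} (h1 : 1 / 2 < α) (h2 : α < 1) (p q : Fin n → ℝ) (hp : effHotsMap A α p = p)
    (hd : ¬ ∃ c, ∀ i, q i - p i = c) : phi A α p < phi A α q := by
  have := nonempty_fin hA0
  have hs := sigma_pos hA hA0 p
  have hg := gam_pos h1 h2
  have hfix := fixed_iff hA hA0 h1 h2 p hp
  have s0 : ∀ r, sigmaFun A r = ∑ x : Fin n × Fin n, aa A r x.1 x.2 := by
    intro r
    rw [Fintype.sum_prod_type]; rfl
  have l1 := lse_ge (fun x : Fin n × Fin n => aa A p x.1 x.2)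
    (fun x => (q x.1 - p x.1) - (q x.2 - p x.2)) (fun x => aa_nonneg hA p _ _)
    (by rw [← s0]; exact hs)
  have l2 := lse_gt (fun i => Real.exp (p i)) (fun i => q i - p i) (fun i => Real.exp_pos _) hd
  have l3 := lse_ge (fun i => Real.exp (-(p i))) (fun i => -(q i - p i))
    (fun i => (Real.exp_pos _).le) (Sm_pos p)
  have m1 : ∑ x : Fin n × Fin n, aa A p x.1 x.2 *
      Real.exp ((q x.1 - p x.1) - (q x.2 - p x.2)) = sigmaFun A q := by
    rw [s0]
    apply Finset.sum_congr rfl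
    intro x _
    unfold aa
    rw [mul_assoc, ← Real.exp_add]
    congr 2; ring
  have m2 : ∑ i, Real.exp (p i) * Real.exp (q i - p i) = Sp q := by
    apply Finset.sum_congr rfl
    intro x _
    rw [← Real.exp_add]; ring_nf
  have m3 : ∑ i, Real.exp (-(p i)) * Real.exp (-(q i - p i)) = Sm q := by
    apply Finset.sum_congr rfl
    intro x _
    rw [← Real.exp_add]; ring_nf
  have n1 : ∑ x : Fin n × Fin n, aa A p x.1 x.2 * ((q x.1 - p x.1) - (q x.2 - p x.2))
      = ∑ k, (q k - p k) * (∑ j, aa A p k j) - ∑ k, (q k - p k) * (∑ i, aa A p i k) := by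
    rw [Fintype.sum_prod_type]
    exact sum_diff (aa A p) (fun k => q k - p k)
  rw [m1, n1, ← s0] at l1
  rw [m2] at l2
  rw [m3] at l3
  change Real.log (Sp p) + _ / Sp p < _ at l2
  change Real.log (Sm p) + _ / Sm p ≤ _ at l3
  have hz : 0 = ∑ k, (q k - p k) * (UU A α p k - VV A α p k) := by
    simp [hfix]
  have hz2 : ∑ k, (q k - p k) * (UU A α p k - VV A α p k)
     = (∑ k, (q k - p k) * (∑ j, aa A p k j) - ∑ k, (q k - p k) * (∑ i, aa A p i k))
       + gam α * sigmaFun A p * ((∑ i, Real.exp (p i) * (q i - p i)) / Sp p)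
       + gam α * sigmaFun A p * ((∑ i, Real.exp (-(p i)) * -(q i - p i)) / Sm p) := by
    rw [Finset.sum_div, Finset.sum_div, Finset.mul_sum, Finset.mul_sum, ← Finset.sum_sub_distrib,
      ← Finset.sum_add_distrib, ← Finset.sum_add_distrib]
    apply Finset.sum_congr rfl
    intro k _
    unfold UU VV
    ring
  rw [← hz] at hz2
  have hz3 : (∑ k, (q k - p k) * (∑ j, aa A p k j) - ∑ k, (q k - p k) * (∑ i, aa A p i k))
       / sigmaFun A p
       + gam α * ((∑ i, Real.exp (p i) * (q i - p i)) / Sp p)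
       + gam α * ((∑ i, Real.exp (-(p i)) * -(q i - p i)) / Sm p) = 0 := by
    have := hs.ne'
    have h : ∀ x y z : ℝ, 0 = x + gam α * sigmaFun A p * y + gam α * sigmaFun A p * z →
      x / sigmaFun A p + gam α * y + gam α * z = 0 := by
      intro x y z h
      field_simp
      linarith
    exact h _ _ _ hz2
  have k2 := mul_lt_mul_of_pos_left l2 hg
  have k3 := mul_le_mul_of_nonneg_left l3 hg.le
  unfold phi
  linarith

lemma unique {n : ℕ} {A : Matrix (Fin n) (Fin n) ℝ} (hA : ∀ i j, 0 ≤ A i j) (hA0 : A ≠ 0)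
    {α : ℝ} (h1 : 1 / 2 < α) (h2 : α < 1) (p q : Fin n → ℝ) (hp : effHotsMap A α p = p)
    (hq : effHotsMap A α q = q) : ∃ c : ℝ, q = p + fun _ => c := by
  by_contra hcon
  have hd : ¬ ∃ c, ∀ i, q i - p i = c := by
    rintro ⟨c, hc⟩
    apply hcon
    refine ⟨c, ?_⟩
    ext i
    have := hc i
    simp
    linarith
  have hd' : ¬ ∃ c, ∀ i, p i - q i = c := by
    rintro ⟨c, hc⟩
    exact hd ⟨-c, fun i => by linarith [hc i]⟩
  exact lt_asymm (phi_gt hA hA0 h1 h2 p q hp hd) (phi_gt hA hA0 h1 h2 q p hq hd')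

lemma aug_cc {n : ℕ} (A : Matrix (Fin n) (Fin n) ℝ) (i j : Fin n) :
    augMatrix A i.castSucc j.castSucc = A i j := by
  simp [augMatrix]

lemma aug_cl {n : ℕ} (A : Matrix (Fin n) (Fin n) ℝ) (i : Fin n) :
    augMatrix A i.castSucc (Fin.last n) = 1 := by
  simp [augMatrix]

lemma aug_ll {n : ℕ} (A : Matrix (Fin n) (Fin n) ℝ) :
    augMatrix A (Fin.last n) (Fin.last n) = 0 := by
  simp [augMatrix]

lemma aug_lc {n : ℕ} (A : Matrix (Fin n) (Fin n) ℝ) (i : Fin n) :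
    augMatrix A (Fin.last n) i.castSucc = 1 := by
  simp [augMatrix]

lemma coercive {n : ℕ} {A : Matrix (Fin n) (Fin n) ℝ} (hA : ∀ i j, 0 ≤ A i j) (hA0 : A ≠ 0)
    {α : ℝ} (h1 : 1 / 2 < α) (h2 : α < 1)
    (hfeas : ∃ ρ : Matrix (Fin (n + 1)) (Fin (n + 1)) ℝ, FeasibleFlow A α ρ) :
    ∃ c C : ℝ, 0 < c ∧ ∀ (p : Fin n → ℝ) (i j : Fin n), C + c * (p i - p j) ≤ phi A α p := by
  have := nonempty_fin hA0
  obtain ⟨ρ, f1, f2, f3, f4, f5, f6⟩ := hfeas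
  have hll : ρ (Fin.last n) (Fin.last n) = 0 := f2 _ _ (aug_ll A)
  obtain ⟨R, hR⟩ : ∃ R : Fin n → Fin n → ℝ, ∀ i j, ρ i.castSucc j.castSucc = R i j :=
    ⟨fun i j => ρ i.castSucc j.castSucc, fun _ _ => rfl⟩
  obtain ⟨x, hx⟩ : ∃ x : Fin n → ℝ, ∀ i, ρ i.castSucc (Fin.last n) = x i :=
    ⟨_, fun _ => rfl⟩
  obtain ⟨y, hy⟩ : ∃ y : Fin n → ℝ, ∀ i, ρ (Fin.last n) i.castSucc = y i :=
    ⟨_, fun _ => rfl⟩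
  have hxpos : ∀ i, 0 < x i := fun i => by
    rw [← hx]; exact f1 _ _ (by rw [aug_cl]; exact one_pos)
  have hypos : ∀ i, 0 < y i := fun i => by
    rw [← hy]; exact f1 _ _ (by rw [aug_lc]; exact one_pos)
  have hRpos : ∀ i j, 0 < A i j → 0 < R i j := fun i j h => by
    rw [← hR]; exact f1 _ _ (by rw [aug_cc]; exact h)
  have hR0 : ∀ i j, A i j = 0 → R i j = 0 := fun i j h => by
    rw [← hR]; exact f2 _ _ (by rw [aug_cc]; exact h)
  have bal : ∀ i, ∑ j, R i j + x i = ∑ j, R j i + y i := by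
    intro i
    have := f4 i.castSucc
    rw [Fin.sum_univ_castSucc, Fin.sum_univ_castSucc] at this
    simpa [hR, hx, hy] using this
  simp_rw [hy] at f5
  simp_rw [hx] at f6
  have tot : ∑ i, ∑ j, R i j = 2 * α - 1 := by
    rw [Fin.sum_univ_castSucc] at f3
    simp_rw [Fin.sum_univ_castSucc (n := n)] at f3
    simp_rw [hR, hx, hy, hll, Finset.sum_add_distrib] at f3
    rw [f5, f6] at f3
    linarith
  have hβ : 0 < 2 * α - 1 := by linarith
  have hgβ : (2 * α - 1) * gam α = 1 - α := by
    unfold gam; field_simp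
  obtain ⟨i0, -, hi0⟩ := Finset.exists_min_image Finset.univ x Finset.univ_nonempty
  set K := ∑ i, ∑ j, R i j * Real.log (A i j) with hK
  refine ⟨x i0 / (2 * α - 1), K / (2 * α - 1), div_pos (hxpos i0) hβ, ?_⟩
  intro p i j
  have b1 : K + ∑ i, ∑ j, R i j * (p i - p j) ≤ (2 * α - 1) * Real.log (sigmaFun A p) := by
    rw [← tot, hK, Finset.sum_mul, ← Finset.sum_add_distrib]
    apply Finset.sum_le_sum
    intro i _
    rw [Finset.sum_mul, ← Finset.sum_add_distrib]
    apply Finset.sum_le_sum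
    intro j _
    rcases (hA i j).eq_or_lt with h | h
    · rw [hR0 i j h.symm]; simp
    · rw [← mul_add]
      apply mul_le_mul_of_nonneg_left _ (hRpos i j h).le
      rw [← Real.log_exp (p i - p j), ← Real.log_mul h.ne' (Real.exp_pos _).ne']
      exact Real.log_le_log (mul_pos h (Real.exp_pos _)) (le_sigma hA p i j)
  have b2 : ∑ i, ∑ j, R i j * (p i - p j) = ∑ i, y i * p i - ∑ i, x i * p i := by
    rw [sum_diff, ← Finset.sum_sub_distrib, ← Finset.sum_sub_distrib]
    apply Finset.sum_congr rfl
    intro k _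
    linear_combination p k * bal k
  have b3 : - ∑ i, y i * p i ≤ (1 - α) * Real.log (Sm p) := by
    rw [← f5, Finset.sum_mul, ← Finset.sum_neg_distrib]
    apply Finset.sum_le_sum
    intro k _
    have := mul_le_mul_of_nonneg_left (le_log_Sm p k) (hypos k).le
    linarith
  have b4 : x i0 * (p i - p j) ≤ (1 - α) * Real.log (Sp p) - ∑ i, x i * p i := by
    rw [← f6, Finset.sum_mul, ← Finset.sum_sub_distrib]
    have hk : ∀ k, 0 ≤ x k * Real.log (Sp p) - x k * p k := by
      intro k
      have := mul_le_mul_of_nonneg_left (le_log_Sp p k) (hxpos k).le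
      linarith
    have t1 := Finset.single_le_sum (f := fun k => x k * Real.log (Sp p) - x k * p k)
      (fun k _ => hk k) (Finset.mem_univ j)
    have t2 := hi0 j (Finset.mem_univ j)
    have t3 := le_log_Sp p j
    have t4 := le_log_Sp p i
    refine le_trans ?_ t1
    have t5 : x i0 * (p i - p j) ≤ x i0 * (Real.log (Sp p) - p j) :=
      mul_le_mul_of_nonneg_left (by linarith) (hxpos i0).le
    have t6 : x i0 * (Real.log (Sp p) - p j) ≤ x j * (Real.log (Sp p) - p j) :=
      mul_le_mul_of_nonneg_right t2 (by linarith)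
    linarith
  have b5 : (2 * α - 1) * phi A α p = (2 * α - 1) * Real.log (sigmaFun A p)
      + (1 - α) * Real.log (Sp p) + (1 - α) * Real.log (Sm p) := by
    unfold phi
    linear_combination (Real.log (Sp p) + Real.log (Sm p)) * hgβ
  have b6 : K + x i0 * (p i - p j) ≤ (2 * α - 1) * phi A α p := by linarith
  rw [div_mul_eq_mul_div, ← add_div, div_le_iff₀ hβ]
  linarith

lemma phi_continuous {n : ℕ} {A : Matrix (Fin n) (Fin n) ℝ} (hA : ∀ i j, 0 ≤ A i j) (hA0 : A ≠ 0)
    (α : ℝ) : Continuous (phi A α) := by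
  have := nonempty_fin hA0
  unfold phi
  have c1 : Continuous fun p => sigmaFun A p := by unfold sigmaFun; fun_prop
  have c2 : Continuous fun p : Fin n → ℝ => Sp p := by unfold Sp; fun_prop
  have c3 : Continuous fun p : Fin n → ℝ => Sm p := by unfold Sm; fun_prop
  exact (c1.log fun p => (sigma_pos hA hA0 p).ne').add (continuous_const.mul
    ((c2.log fun p => (Sp_pos p).ne').add (c3.log fun p => (Sm_pos p).ne')))

lemma map_differentiable {n : ℕ} {A : Matrix (Fin n) (Fin n) ℝ} (hA : ∀ i j, 0 ≤ A i j)
    (hA0 : A ≠ 0) {α : ℝ} (h1 : 1 / 2 < α) (h2 : α < 1) :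
    Differentiable ℝ (effHotsMap A α) := by
  have := nonempty_fin hA0
  have c1 : Differentiable ℝ fun p => sigmaFun A p := by unfold sigmaFun; fun_prop
  have c2 : Differentiable ℝ fun p : Fin n → ℝ => Sp p := by unfold Sp; fun_prop
  have c3 : Differentiable ℝ fun p : Fin n → ℝ => Sm p := by unfold Sm; fun_prop
  rw [differentiable_pi]
  intro k
  have e : (fun p => effHotsMap A α p k) = fun p => p k + 1 / 2 * (Real.log (VV A α p k)
      - Real.log (UU A α p k)) := by
    ext p; exact map_eq hA hA0 h1 h2 p k
  rw [e]
  have cU : Differentiable ℝ fun p => UU A α p k := by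
    unfold UU aa
    have : Differentiable ℝ fun p : Fin n → ℝ => Real.exp (p k) / Sp p :=
      by
      intro p
      simp_rw [div_eq_mul_inv]
      exact DifferentiableAt.fun_mul (by fun_prop) ((c2 p).fun_inv (Sp_pos p).ne')
    fun_prop
  have cV : Differentiable ℝ fun p => VV A α p k := by
    unfold VV aa
    have : Differentiable ℝ fun p : Fin n → ℝ => Real.exp (-(p k)) / Sm p :=
      by
      intro p
      simp_rw [div_eq_mul_inv]
      exact DifferentiableAt.fun_mul (by fun_prop) ((c3 p).fun_inv (Sm_pos p).ne')
    fun_prop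
  have lU := cU.log fun p => (UU_pos hA hA0 h1 h2 p k).ne'
  have lV := cV.log fun p => (VV_pos hA hA0 h1 h2 p k).ne'
  fun_prop

/-- normalization at a coordinate -/
lemma norm_le_of_normalized {n : ℕ} {A : Matrix (Fin n) (Fin n) ℝ} {α c C v : ℝ} (hc : 0 < c)
    (hco : ∀ (p : Fin n → ℝ) (i j : Fin n), C + c * (p i - p j) ≤ phi A α p)
    (i0 : Fin n) (p : Fin n → ℝ) (h0 : p i0 = 0) (hv : phi A α p ≤ v) :
    ‖p‖ ≤ |(v - C) / c| := by
  rw [pi_norm_le_iff_of_nonneg (abs_nonneg _)]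
  intro i
  have a1 := hco p i i0
  have a2 := hco p i0 i
  rw [h0] at a1 a2
  have b1 : p i ≤ (v - C) / c := by rw [le_div_iff₀ hc]; linarith
  have b2 : - p i ≤ (v - C) / c := by rw [le_div_iff₀ hc]; linarith
  rw [Real.norm_eq_abs]
  exact (abs_le.2 ⟨by linarith, b1⟩).trans (le_abs_self _)

lemma exists_fixed {n : ℕ} {A : Matrix (Fin n) (Fin n) ℝ} (hA : ∀ i j, 0 ≤ A i j) (hA0 : A ≠ 0)
    {α : ℝ} (h1 : 1 / 2 < α) (h2 : α < 1)
    (hfeas : ∃ ρ : Matrix (Fin (n + 1)) (Fin (n + 1)) ℝ, FeasibleFlow A α ρ) :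
    ∃ p, effHotsMap A α p = p := by
  have := nonempty_fin hA0
  obtain ⟨c, C, hc, hco⟩ := coercive hA hA0 h1 h2 hfeas
  obtain ⟨i0⟩ := nonempty_fin hA0
  set R := |(phi A α 0 - C) / c| with hR
  have hR0 : 0 ≤ R := abs_nonneg _
  obtain ⟨p, hp, hmin⟩ := (isCompact_closedBall (0 : Fin n → ℝ) R).exists_isMinOn
    ⟨0, by simpa using hR0⟩ (phi_continuous hA hA0 α).continuousOn
  refine ⟨p, ?_⟩
  by_contra hne
  have hl := lyapunov hA hA0 h1 h2 p hne
  set q := effHotsMap A α p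
  have hp0 : phi A α p ≤ phi A α 0 := hmin (by simpa using hR0)
  have hs := phi_shift A α q (-(q i0))
  have hn := norm_le_of_normalized hc hco i0 (q + fun _ => -(q i0)) (by simp)
    (hs.le.trans (hl.le.trans hp0))
  have := hmin (show (q + fun _ => -(q i0)) ∈ Metric.closedBall 0 R by simpa using hn)
  simp only [Set.mem_ofPred_eq] at this
  rw [hs] at this
  linarith

/-- Global convergence modulo constants. -/
lemma global_conv {n : ℕ} {A : Matrix (Fin n) (Fin n) ℝ} (hA : ∀ i j, 0 ≤ A i j) (hA0 : A ≠ 0)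
    {α : ℝ} (h1 : 1 / 2 < α) (h2 : α < 1)
    (hfeas : ∃ ρ : Matrix (Fin (n + 1)) (Fin (n + 1)) ℝ, FeasibleFlow A α ρ)
    (ps : Fin n → ℝ) (hps : effHotsMap A α ps = ps) (i0 : Fin n) (p0 : Fin n → ℝ) :
    Tendsto (fun k => (effHotsMap A α)^[k] p0 + fun _ => -((effHotsMap A α)^[k] p0 i0)) atTop
      (nhds (ps + fun _ => -(ps i0))) := by
  have := nonempty_fin hA0
  obtain ⟨c, C, hc, hco⟩ := coercive hA hA0 h1 h2 hfeas
  set F := effHotsMap A α with hF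
  have hFc : Continuous F := (map_differentiable hA hA0 h1 h2).continuous
  have hφc := phi_continuous hA hA0 α
  set z : ℕ → Fin n → ℝ := fun k => F^[k] p0 + fun _ => -(F^[k] p0 i0) with hz
  have hφz : ∀ k, phi A α (z k) = phi A α (F^[k] p0) := fun k => phi_shift A α _ _
  have hstep : ∀ k, phi A α (F (z k)) = phi A α (z (k + 1)) := by
    intro k
    rw [hφz, Function.iterate_succ_apply', hF, hz]
    simp only
    rw [map_shift hA hA0 h1 h2, phi_shift]
  have hanti : Antitone fun k => phi A α (z k) := by
    apply antitone_nat_of_succ_le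
    intro k
    rw [← hstep]
    exact lyapunov_le hA hA0 h1 h2 _
  have hbdd : BddBelow (Set.range fun k => phi A α (z k)) := by
    refine ⟨C, ?_⟩
    rintro _ ⟨k, rfl⟩
    have := hco (z k) i0 i0
    simpa using this
  have hlim := tendsto_atTop_ciInf hanti hbdd
  set L := ⨅ k, phi A α (z k)
  set R := |(phi A α (z 0) - C) / c| with hR
  have hK : ∀ k, z k ∈ Metric.closedBall (0 : Fin n → ℝ) R := by
    intro k
    have := norm_le_of_normalized hc hco i0 (z k) (by simp [hz]) (hanti (Nat.zero_le k))
    simpa using this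
  apply (isCompact_closedBall (0 : Fin n → ℝ) R).tendsto_nhds_of_unique_mapClusterPt
    (Eventually.of_forall hK)
  intro w _ hw
  obtain ⟨ψ, hψ, hψw⟩ := hw.tendsto_subseq
  have w0 : w i0 = 0 := by
    have h := (continuous_apply i0).tendsto w |>.comp hψw
    have h' : Tendsto (fun _ : ℕ => (0 : ℝ)) atTop (nhds (w i0)) := by
      refine h.congr ?_
      intro k
      simp [hz]
    exact tendsto_nhds_unique h' tendsto_const_nhds
  have e1 : phi A α w = L :=
    tendsto_nhds_unique ((hφc.tendsto w).comp hψw) (hlim.comp hψ.tendsto_atTop)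
  have e2 : phi A α (F w) = L := by
    have h := ((hφc.comp hFc).tendsto w).comp hψw
    have h' := (hlim.comp (tendsto_add_atTop_nat 1)).comp hψ.tendsto_atTop
    refine tendsto_nhds_unique h (h'.congr ?_)
    intro k
    exact (hstep _).symm
  have hfix : F w = w := by
    by_contra hne
    have := lyapunov hA hA0 h1 h2 w hne
    rw [← hF] at this
    linarith
  obtain ⟨c', hc'⟩ := unique hA hA0 h1 h2 ps w hps hfix
  have : ps i0 + c' = 0 := by
    rw [hc'] at w0; simpa using w0
  rw [hc']
  ext i
  simp
  linarith

lemma sum_weights_sq {n : ℕ} (u d : Fin n → ℝ) (hu1 : ∑ i, u i = 1) :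
    ∑ i, u i * d i ^ 2 - (∑ i, u i * d i) ^ 2 = ∑ i, u i * (d i - ∑ j, u j * d j) ^ 2 := by
  set U := ∑ i, u i * d i with hU
  have : ∀ i, u i * (d i - U) ^ 2 = u i * d i ^ 2 - 2 * U * (u i * d i) + U ^ 2 * u i := by
    intro i; ring
  simp_rw [this, Finset.sum_add_distrib, Finset.sum_sub_distrib, ← Finset.mul_sum]
  rw [hu1, ← hU]
  ring

/-- The derivative of `2 m_k F_k` at a fixed point, in direction `d`. -/
lemma dir_deriv {n : ℕ} {A : Matrix (Fin n) (Fin n) ℝ} (hA : ∀ i j, 0 ≤ A i j)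
    (hA0 : A ≠ 0) {α : ℝ} (h1 : 1 / 2 < α) (h2 : α < 1) (p d : Fin n → ℝ) (k : Fin n) :
    fderiv ℝ (effHotsMap A α) p d k = d k + 1 / 2 * (
      ((∑ i, aa A p i k * (d i - d k)) +
        (gam α * (∑ i, ∑ j, aa A p i j * (d i - d j)) * (Real.exp (-(p k)) / Sm p)
        + gam α * sigmaFun A p * (Real.exp (-(p k)) / Sm p *
          (-d k + ∑ j, Real.exp (-(p j)) / Sm p * d j)))) / VV A α p k
      - ((∑ j, aa A p k j * (d k - d j)) +
        (gam α * (∑ i, ∑ j, aa A p i j * (d i - d j)) * (Real.exp (p k) / Sp p)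
        + gam α * sigmaFun A p * (Real.exp (p k) / Sp p *
          (d k - ∑ j, Real.exp (p j) / Sp p * d j)))) / UU A α p k) := by
  have := nonempty_fin hA0
  have hl : ∀ i, HasDerivAt (fun t : ℝ => (p + t • d) i) (d i) 0 := by
    intro i
    simpa using ((hasDerivAt_id (0 : ℝ)).mul_const (d i)).const_add (p i)
  have hz : p + (0 : ℝ) • d = p := by simp
  have hzi : ∀ i, (p + (0 : ℝ) • d) i = p i := by intro i; rw [hz]
  have hlv : HasDerivAt (fun t : ℝ => p + t • d) d 0 := hasDerivAt_pi.2 hl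
  have hd := (map_differentiable hA hA0 h1 h2 (p + (0 : ℝ) • d)).hasFDerivAt.comp_hasDerivAt 0 hlv
  rw [hz] at hd
  have hdk := hasDerivAt_pi.1 hd k
  have ha : ∀ i j, HasDerivAt (fun t : ℝ => aa A (p + t • d) i j) (aa A p i j * (d i - d j)) 0 := by
    intro i j
    have := (((hl i).sub (hl j)).exp).const_mul (A i j)
    rw [Pi.sub_apply, hzi, hzi] at this
    unfold aa
    rw [mul_assoc]
    exact this
  have hsig : HasDerivAt (fun t : ℝ => sigmaFun A (p + t • d))
      (∑ i, ∑ j, aa A p i j * (d i - d j)) 0 :=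
    HasDerivAt.fun_sum fun i _ => HasDerivAt.fun_sum fun j _ => ha i j
  have he : ∀ i, HasDerivAt (fun t : ℝ => Real.exp ((p + t • d) i)) (Real.exp (p i) * d i) 0 := by
    intro i
    have := (hl i).exp
    rwa [hzi] at this
  have hem : ∀ i, HasDerivAt (fun t : ℝ => Real.exp (-((p + t • d) i)))
      (Real.exp (-(p i)) * -d i) 0 := by
    intro i
    have := (hl i).fun_neg.exp
    rwa [hzi] at this
  have hSp : HasDerivAt (fun t : ℝ => Sp (p + t • d)) (∑ i, Real.exp (p i) * d i) 0 :=
    HasDerivAt.fun_sum fun i _ => he i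
  have hSm : HasDerivAt (fun t : ℝ => Sm (p + t • d)) (∑ i, Real.exp (-(p i)) * -d i) 0 :=
    HasDerivAt.fun_sum fun i _ => hem i
  have Spp := (Sp_pos p).ne'
  have Smp := (Sm_pos p).ne'
  have hu : HasDerivAt (fun t : ℝ => Real.exp ((p + t • d) k) / Sp (p + t • d))
      (Real.exp (p k) / Sp p * (d k - ∑ j, Real.exp (p j) / Sp p * d j)) 0 := by
    have := (he k).fun_div hSp (by rw [hz]; exact Spp)
    rw [hz] at this
    refine this.congr_deriv ?_
    have e : ∑ j, Real.exp (p j) / Sp p * d j = (∑ j, Real.exp (p j) * d j) / Sp p := by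
      rw [Finset.sum_div]
      exact Finset.sum_congr rfl fun j _ => by ring
    rw [e]
    field_simp
  have hv : HasDerivAt (fun t : ℝ => Real.exp (-((p + t • d) k)) / Sm (p + t • d))
      (Real.exp (-(p k)) / Sm p * (-d k + ∑ j, Real.exp (-(p j)) / Sm p * d j)) 0 := by
    have := (hem k).fun_div hSm (by rw [hz]; exact Smp)
    rw [hz] at this
    refine this.congr_deriv ?_
    have e : ∑ j, Real.exp (-(p j)) / Sm p * d j = (∑ j, Real.exp (-(p j)) * d j) / Sm p := by
      rw [Finset.sum_div]
      exact Finset.sum_congr rfl fun j _ => by ring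
    rw [e]
    simp_rw [mul_neg, Finset.sum_neg_distrib]
    field_simp
    ring
  have hV := (HasDerivAt.fun_sum (u := Finset.univ) fun i _ => ha i k).fun_add
    ((hsig.const_mul (gam α)).fun_mul hv)
  have hU := (HasDerivAt.fun_sum (u := Finset.univ) fun j _ => ha k j).fun_add
    ((hsig.const_mul (gam α)).fun_mul hu)
  change HasDerivAt (fun t : ℝ => VV A α (p + t • d) k) _ 0 at hV
  change HasDerivAt (fun t : ℝ => UU A α (p + t • d) k) _ 0 at hU
  have hF := (hl k).fun_add (((hV.log (VV_pos hA hA0 h1 h2 _ k).ne').fun_sub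
    (hU.log (UU_pos hA hA0 h1 h2 _ k).ne')).const_mul (1 / 2))
  simp only [hz] at hF
  have e : (fun t : ℝ => (effHotsMap A α ∘ fun t : ℝ => p + t • d) t k) = fun t : ℝ =>
      (p + t • d) k + 1 / 2 * (Real.log (VV A α (p + t • d) k)
        - Real.log (UU A α (p + t • d) k)) := by
    ext t; exact map_eq hA hA0 h1 h2 _ k
  rw [e] at hdk
  exact hdk.unique hF

/-- The weighted Jacobian as an explicit symmetric bilinear form. -/
lemma jac_form {n : ℕ} {A : Matrix (Fin n) (Fin n) ℝ} (hA : ∀ i j, 0 ≤ A i j)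
    (hA0 : A ≠ 0) {α : ℝ} (h1 : 1 / 2 < α) (h2 : α < 1) (p : Fin n → ℝ)
    (hp : effHotsMap A α p = p) (u v : Fin n → ℝ) (hu : ∀ i, u i = Real.exp (p i) / Sp p)
    (hv : ∀ i, v i = Real.exp (-(p i)) / Sm p) (d e : Fin n → ℝ) :
    2 * ∑ k, UU A α p k * (e k * fderiv ℝ (effHotsMap A α) p d k) =
      (∑ i, ∑ j, aa A p i j * (d i * e j + e i * d j))
      + gam α * sigmaFun A p * ((∑ i, v i * d i) * (∑ i, v i * e i)
        + (∑ i, u i * d i) * (∑ i, u i * e i)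
        + gam α * ((∑ i, v i * d i - ∑ i, u i * d i) * (∑ i, v i * e i - ∑ i, u i * e i))) := by
  have hfix := fixed_iff hA hA0 h1 h2 p hp
  have hk : ∀ k, 2 * (UU A α p k * (e k * fderiv ℝ (effHotsMap A α) p d k)) =
      e k * (∑ i, aa A p i k * d i) + e k * (∑ j, aa A p k j * d j)
      + gam α * sigmaFun A p * (∑ i, v i * d i) * (v k * e k)
      + gam α * sigmaFun A p * (∑ i, u i * d i) * (u k * e k)
      + gam α * (∑ i, ∑ j, aa A p i j * (d i - d j)) * (v k * e k)
      - gam α * (∑ i, ∑ j, aa A p i j * (d i - d j)) * (u k * e k) := by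
    intro k
    rw [dir_deriv hA hA0 h1 h2, hfix k]
    simp_rw [← hu, ← hv]
    have hU := UU_pos hA hA0 h1 h2 p k
    have e1 : ∑ i, aa A p i k * (d i - d k) = ∑ i, aa A p i k * d i - d k * ∑ i, aa A p i k := by
      rw [Finset.mul_sum, ← Finset.sum_sub_distrib]
      exact Finset.sum_congr rfl fun j _ => by ring
    have e2 : ∑ j, aa A p k j * (d k - d j) = d k * ∑ j, aa A p k j - ∑ j, aa A p k j * d j := by
      rw [Finset.mul_sum, ← Finset.sum_sub_distrib]
      exact Finset.sum_congr rfl fun j _ => by ring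
    have eU : UU A α p k = (∑ j, aa A p k j) + gam α * sigmaFun A p * u k := by
      rw [hu]; rfl
    have eV : UU A α p k = (∑ i, aa A p i k) + gam α * sigmaFun A p * v k := by
      rw [← hfix, hv]; rfl
    rw [e1, e2]
    have hc : ∀ x y z : ℝ, 2 * (UU A α p k * (e k * (z + 1 / 2 * (x / UU A α p k - y / UU A α p k))))
      = e k * (2 * UU A α p k * z + x - y) := by
      intro x y z; field_simp; ring
    rw [hc]
    linear_combination e k * d k * eU + e k * d k * eV
  have hsd : ∑ i, ∑ j, aa A p i j * (d i - d j)
      = gam α * sigmaFun A p * (∑ i, v i * d i - ∑ i, u i * d i) := by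
    rw [sum_diff, ← Finset.sum_sub_distrib, ← Finset.sum_sub_distrib, Finset.mul_sum]
    apply Finset.sum_congr rfl
    intro k _
    have eU : UU A α p k = (∑ j, aa A p k j) + gam α * sigmaFun A p * u k := by
      rw [hu]; rfl
    have eV : UU A α p k = (∑ i, aa A p i k) + gam α * sigmaFun A p * v k := by
      rw [← hfix, hv]; rfl
    linear_combination d k * eV - d k * eU
  rw [Finset.mul_sum]
  simp_rw [hk, hsd]
  simp_rw [Finset.sum_sub_distrib, Finset.sum_add_distrib, ← Finset.mul_sum]
  have s1 : ∑ k, e k * (∑ i, aa A p i k * d i) + ∑ k, e k * (∑ j, aa A p k j * d j)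
      = ∑ i, ∑ j, aa A p i j * (d i * e j + e i * d j) := by
    simp_rw [Finset.mul_sum]
    rw [Finset.sum_comm, ← Finset.sum_add_distrib]
    apply Finset.sum_congr rfl
    intro i _
    rw [← Finset.sum_add_distrib]
    apply Finset.sum_congr rfl
    intro j _
    ring
  rw [s1]
  ring

lemma jac_facts {n : ℕ} {A : Matrix (Fin n) (Fin n) ℝ} (hA : ∀ i j, 0 ≤ A i j)
    (hA0 : A ≠ 0) {α : ℝ} (h1 : 1 / 2 < α) (h2 : α < 1) (p : Fin n → ℝ)
    (hp : effHotsMap A α p = p) :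
    (∀ d e : Fin n → ℝ, ∑ k, UU A α p k * (e k * fderiv ℝ (effHotsMap A α) p d k)
      = ∑ k, UU A α p k * (d k * fderiv ℝ (effHotsMap A α) p e k)) ∧
    (∀ d : Fin n → ℝ, ∑ k, UU A α p k * (d k * fderiv ℝ (effHotsMap A α) p d k)
      ≤ ∑ k, UU A α p k * d k ^ 2) ∧
    (∀ d : Fin n → ℝ, ∑ k, UU A α p k * (d k * fderiv ℝ (effHotsMap A α) p d k)
      = ∑ k, UU A α p k * d k ^ 2 → ∃ c, ∀ i, d i = c) ∧
    (∀ d : Fin n → ℝ, d ≠ 0 → - ∑ k, UU A α p k * d k ^ 2 <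
      ∑ k, UU A α p k * (d k * fderiv ℝ (effHotsMap A α) p d k)) := by
  have := nonempty_fin hA0
  obtain ⟨u, hu⟩ : ∃ u : Fin n → ℝ, ∀ i, u i = Real.exp (p i) / Sp p := ⟨_, fun _ => rfl⟩
  obtain ⟨v, hv⟩ : ∃ v : Fin n → ℝ, ∀ i, v i = Real.exp (-(p i)) / Sm p := ⟨_, fun _ => rfl⟩
  have hQ := jac_form hA hA0 h1 h2 p hp u v hu hv
  have hfix := fixed_iff hA hA0 h1 h2 p hp
  have hs := sigma_pos hA hA0 p
  have hg := gam_pos h1 h2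
  have hu0 : ∀ i, 0 < u i := fun i => by rw [hu]; exact div_pos (Real.exp_pos _) (Sp_pos p)
  have hv0 : ∀ i, 0 < v i := fun i => by rw [hv]; exact div_pos (Real.exp_pos _) (Sm_pos p)
  have hu1 : ∑ i, u i = 1 := by
    simp_rw [hu, ← Finset.sum_div]; exact div_self (Sp_pos p).ne'
  have hv1 : ∑ i, v i = 1 := by
    simp_rw [hv, ← Finset.sum_div]; exact div_self (Sm_pos p).ne'
  have hM : ∀ d : Fin n → ℝ, 2 * ∑ k, UU A α p k * d k ^ 2 =
      (∑ i, ∑ j, aa A p i j * (d i ^ 2 + d j ^ 2))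
      + gam α * sigmaFun A p * (∑ i, u i * d i ^ 2) + gam α * sigmaFun A p * (∑ i, v i * d i ^ 2) := by
    intro d
    have e1 : ∑ k, UU A α p k * d k ^ 2 = ∑ k, d k ^ 2 * (∑ j, aa A p k j)
        + gam α * sigmaFun A p * (∑ i, u i * d i ^ 2) := by
      rw [Finset.mul_sum, ← Finset.sum_add_distrib]
      apply Finset.sum_congr rfl
      intro k _
      rw [hu]; unfold UU; ring
    have e2 : ∑ k, UU A α p k * d k ^ 2 = ∑ k, d k ^ 2 * (∑ i, aa A p i k)
        + gam α * sigmaFun A p * (∑ i, v i * d i ^ 2) := by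
      rw [Finset.mul_sum, ← Finset.sum_add_distrib]
      apply Finset.sum_congr rfl
      intro k _
      rw [hv, ← hfix]; unfold VV; ring
    have e3 : ∑ k, d k ^ 2 * (∑ j, aa A p k j) + ∑ k, d k ^ 2 * (∑ i, aa A p i k)
        = ∑ i, ∑ j, aa A p i j * (d i ^ 2 + d j ^ 2) := by
      simp_rw [Finset.mul_sum]
      rw [Finset.sum_comm (f := fun k i => d k ^ 2 * aa A p i k), ← Finset.sum_add_distrib]
      apply Finset.sum_congr rfl
      intro i _
      rw [← Finset.sum_add_distrib]
      apply Finset.sum_congr rfl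
      intro j _
      ring
    linarith
  have hdiff : ∀ d : Fin n → ℝ, gam α * sigmaFun A p *
      (∑ i, u i * (d i - ∑ j, u j * d j) ^ 2 + ∑ i, v i * (d i - ∑ j, v j * d j) ^ 2) ≤
      2 * ∑ k, UU A α p k * d k ^ 2
        - 2 * ∑ k, UU A α p k * (d k * fderiv ℝ (effHotsMap A α) p d k) := by
    intro d
    have hsd : ∑ i, ∑ j, aa A p i j * (d i - d j)
        = gam α * sigmaFun A p * (∑ i, v i * d i - ∑ i, u i * d i) := by
      rw [sum_diff, ← Finset.sum_sub_distrib, ← Finset.sum_sub_distrib, Finset.mul_sum]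
      apply Finset.sum_congr rfl
      intro k _
      have eU : UU A α p k = (∑ j, aa A p k j) + gam α * sigmaFun A p * u k := by
        rw [hu]; rfl
      have eV : UU A α p k = (∑ i, aa A p i k) + gam α * sigmaFun A p * v k := by
        rw [← hfix, hv]; rfl
      linear_combination d k * eV - d k * eU
    rw [hM, hQ, ← sum_weights_sq u d hu1, ← sum_weights_sq v d hv1]
    set D := ∑ i, v i * d i - ∑ i, u i * d i with hD
    have e4 : ∑ i, ∑ j, aa A p i j * (d i ^ 2 + d j ^ 2)
        - ∑ i, ∑ j, aa A p i j * (d i * d j + d i * d j)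
        = ∑ i, ∑ j, aa A p i j * (d i - d j) ^ 2 := by
      simp_rw [← Finset.sum_sub_distrib]
      apply Finset.sum_congr rfl
      intro i _
      apply Finset.sum_congr rfl
      intro j _
      ring
    have e5 : 0 ≤ ∑ i, ∑ j, aa A p i j * ((d i - d j) - gam α * D) ^ 2 :=
      Finset.sum_nonneg fun i _ => Finset.sum_nonneg fun j _ =>
        mul_nonneg (aa_nonneg hA p i j) (sq_nonneg _)
    have e6 : ∑ i, ∑ j, aa A p i j * ((d i - d j) - gam α * D) ^ 2
        = ∑ i, ∑ j, aa A p i j * (d i - d j) ^ 2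
          - 2 * (gam α * D) * (∑ i, ∑ j, aa A p i j * (d i - d j))
          + (gam α * D) ^ 2 * sigmaFun A p := by
      have : ∀ i j, aa A p i j * ((d i - d j) - gam α * D) ^ 2
        = aa A p i j * (d i - d j) ^ 2 - 2 * (gam α * D) * (aa A p i j * (d i - d j))
          + (gam α * D) ^ 2 * aa A p i j := by intro i j; ring
      simp_rw [this, Finset.sum_add_distrib, Finset.sum_sub_distrib, ← Finset.mul_sum]
      rfl
    rw [e6, hsd] at e5
    nlinarith
  refine ⟨?_, ?_, ?_, ?_⟩
  · intro d e
    have a1 := hQ d e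
    have a2 := hQ e d
    have e7 : ∑ i, ∑ j, aa A p i j * (d i * e j + e i * d j)
        = ∑ i, ∑ j, aa A p i j * (e i * d j + d i * e j) :=
      Finset.sum_congr rfl fun i _ => Finset.sum_congr rfl fun j _ => by ring
    rw [e7] at a1
    linarith
  · intro d
    have h3 := hdiff d
    have h4 : 0 ≤ ∑ i, u i * (d i - ∑ j, u j * d j) ^ 2 :=
      Finset.sum_nonneg fun i _ => mul_nonneg (hu0 i).le (sq_nonneg _)
    have h5 : 0 ≤ ∑ i, v i * (d i - ∑ j, v j * d j) ^ 2 :=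
      Finset.sum_nonneg fun i _ => mul_nonneg (hv0 i).le (sq_nonneg _)
    have : 0 ≤ gam α * sigmaFun A p *
      (∑ i, u i * (d i - ∑ j, u j * d j) ^ 2 + ∑ i, v i * (d i - ∑ j, v j * d j) ^ 2) := by
      positivity
    linarith
  · intro d hd
    have h3 := hdiff d
    have h4 : 0 ≤ ∑ i, u i * (d i - ∑ j, u j * d j) ^ 2 :=
      Finset.sum_nonneg fun i _ => mul_nonneg (hu0 i).le (sq_nonneg _)
    have h5 : 0 ≤ ∑ i, v i * (d i - ∑ j, v j * d j) ^ 2 :=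
      Finset.sum_nonneg fun i _ => mul_nonneg (hv0 i).le (sq_nonneg _)
    rw [hd, sub_self] at h3
    have h6 : ∑ i, u i * (d i - ∑ j, u j * d j) ^ 2 = 0 := by
      have := mul_pos hg hs
      nlinarith
    refine ⟨∑ j, u j * d j, fun i => ?_⟩
    have h7 := (Finset.sum_eq_zero_iff_of_nonneg
      fun i _ => mul_nonneg (hu0 i).le (sq_nonneg (d i - ∑ j, u j * d j))).1 h6 i
      (Finset.mem_univ i)
    have h8 : (d i - ∑ j, u j * d j) ^ 2 = 0 := (mul_eq_zero.1 h7).resolve_left (hu0 i).ne'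
    have := pow_eq_zero_iff (two_ne_zero) |>.1 h8
    linarith
  · intro d hd
    obtain ⟨k, hk⟩ := Function.ne_iff.1 hd
    have a1 := hQ d d
    have a2 := hM d
    have p1 : 0 < ∑ i, u i * d i ^ 2 := by
      apply Finset.sum_pos' (fun i _ => mul_nonneg (hu0 i).le (sq_nonneg _))
      exact ⟨k, Finset.mem_univ _, mul_pos (hu0 k) (sq_pos_of_ne_zero hk)⟩
    have p2 : 0 ≤ ∑ i, v i * d i ^ 2 :=
      Finset.sum_nonneg fun i _ => mul_nonneg (hv0 i).le (sq_nonneg _)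
    have p3 : 0 ≤ ∑ i, ∑ j, aa A p i j * (d i ^ 2 + d j ^ 2)
        + ∑ i, ∑ j, aa A p i j * (d i * d j + d i * d j) := by
      simp_rw [← Finset.sum_add_distrib]
      apply Finset.sum_nonneg
      intro i _
      apply Finset.sum_nonneg
      intro j _
      have := mul_nonneg (aa_nonneg hA p i j) (sq_nonneg (d i + d j))
      linarith
    have p4 : 0 < gam α * sigmaFun A p * (∑ i, u i * d i ^ 2) := by positivity
    have p5 : 0 ≤ gam α * sigmaFun A p * (∑ i, v i * d i ^ 2) := by positivity
    have p6 : 0 ≤ gam α * sigmaFun A p * ((∑ i, v i * d i) * (∑ i, v i * d i)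
        + (∑ i, u i * d i) * (∑ i, u i * d i)
        + gam α * ((∑ i, v i * d i - ∑ i, u i * d i) * (∑ i, v i * d i - ∑ i, u i * d i))) := by
      have q1 := mul_self_nonneg (∑ i, v i * d i)
      have q2 := mul_self_nonneg (∑ i, u i * d i)
      have q3 := mul_self_nonneg (∑ i, v i * d i - ∑ i, u i * d i)
      positivity
    linarith

lemma jac_one {n : ℕ} {A : Matrix (Fin n) (Fin n) ℝ} (hA : ∀ i j, 0 ≤ A i j)
    (hA0 : A ≠ 0) {α : ℝ} (h1 : 1 / 2 < α) (h2 : α < 1) (p : Fin n → ℝ) (c : ℝ) :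
    fderiv ℝ (effHotsMap A α) p (fun _ => c) = fun _ => c := by
  ext k
  rw [dir_deriv hA hA0 h1 h2]
  have := nonempty_fin hA0
  have hu1 : ∑ j, Real.exp (p j) / Sp p = 1 := by
    simp_rw [← Finset.sum_div]; exact div_self (Sp_pos p).ne'
  have hv1 : ∑ j, Real.exp (-(p j)) / Sm p = 1 := by
    simp_rw [← Finset.sum_div]; exact div_self (Sm_pos p).ne'
  simp [← Finset.sum_mul, hu1, hv1]

lemma mem_spec {n : ℕ} (N : Matrix (Fin n) (Fin n) ℂ) (μ : ℂ) :
    μ ∈ spectrum ℂ N ↔ ∃ z : Fin n → ℂ, z ≠ 0 ∧ N *ᵥ z = μ • z := by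
  rw [← Matrix.spectrum_toLin', ← Module.End.hasEigenvalue_iff_mem_spectrum]
  constructor
  · intro h
    obtain ⟨z, hz⟩ := h.exists_hasEigenvector
    exact ⟨z, hz.2, by simpa using hz.apply_eq_smul⟩
  · rintro ⟨z, hz, h⟩
    refine Module.End.hasEigenvalue_of_hasEigenvector (x := z) ⟨?_, hz⟩
    rw [Module.End.mem_eigenspace_iff]
    simpa using h

lemma spec_real {n : ℕ} (m : Fin n → ℝ) (hm : ∀ k, 0 < m k)
    (J : (Fin n → ℝ) →ₗ[ℝ] (Fin n → ℝ))
    (symm : ∀ d e : Fin n → ℝ, ∑ k, m k * (e k * J d k) = ∑ k, m k * (d k * J e k))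
    (upper : ∀ d : Fin n → ℝ, ∑ k, m k * (d k * J d k) ≤ ∑ k, m k * d k ^ 2)
    (lower : ∀ d : Fin n → ℝ, d ≠ 0 → - ∑ k, m k * d k ^ 2 < ∑ k, m k * (d k * J d k))
    (μ : ℂ) (hμ : μ ∈ spectrum ℂ ((LinearMap.toMatrix' J).map Complex.ofReal)) (hμ1 : μ ≠ 1) :
    ‖μ‖ < 1 := by
  obtain ⟨z, hz, hN⟩ := (mem_spec _ _).1 hμ
  obtain ⟨x, hx⟩ : ∃ x : Fin n → ℝ, ∀ i, x i = (z i).re := ⟨_, fun _ => rfl⟩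
  obtain ⟨y, hy⟩ : ∃ y : Fin n → ℝ, ∀ i, y i = (z i).im := ⟨_, fun _ => rfl⟩
  have hJ : ∀ w k, J w k = ∑ l, LinearMap.toMatrix' J k l * w l := by
    intro w k
    have : J w = LinearMap.toMatrix' J *ᵥ w := (LinearMap.toMatrix'_mulVec J w).symm
    rw [this]; rfl
  have hJx : ∀ k, J x k = μ.re * x k - μ.im * y k := by
    intro k
    have h := congrArg Complex.re (congrFun hN k)
    simp only [Matrix.mulVec, dotProduct, Matrix.map_apply, Complex.re_sum,
      Pi.smul_apply, smul_eq_mul, Complex.mul_re, ← hx, ← hy] at h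
    rw [hJ, ← h]
    simp [hx]
  have hJy : ∀ k, J y k = μ.re * y k + μ.im * x k := by
    intro k
    have h := congrArg Complex.im (congrFun hN k)
    simp only [Matrix.mulVec, dotProduct, Matrix.map_apply, Complex.im_sum,
      Pi.smul_apply, smul_eq_mul, Complex.mul_im, ← hx, ← hy] at h
    rw [hJ, ← h]
    simp [hy]
  have hpos : ∀ w : Fin n → ℝ, w ≠ 0 → 0 < ∑ k, m k * w k ^ 2 := by
    intro w hw
    obtain ⟨k, hk⟩ := Function.ne_iff.1 hw
    apply Finset.sum_pos' (fun i _ => mul_nonneg (hm i).le (sq_nonneg _))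
    exact ⟨k, Finset.mem_univ _, mul_pos (hm k) (sq_pos_of_ne_zero hk)⟩
  have hnn : ∀ w : Fin n → ℝ, 0 ≤ ∑ k, m k * w k ^ 2 := fun w =>
    Finset.sum_nonneg fun i _ => mul_nonneg (hm i).le (sq_nonneg _)
  have hxy : x ≠ 0 ∨ y ≠ 0 := by
    by_contra! hcon
    apply hz
    ext i
    apply Complex.ext
    · rw [← hx, hcon.1]; rfl
    · rw [← hy, hcon.2]; rfl
  have hb : μ.im = 0 := by
    have h := symm x y
    simp_rw [hJx, hJy] at h
    have e : ∑ k, m k * (x k * (μ.re * y k + μ.im * x k))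
        - ∑ k, m k * (y k * (μ.re * x k - μ.im * y k))
        = μ.im * (∑ k, m k * x k ^ 2 + ∑ k, m k * y k ^ 2) := by
      rw [← Finset.sum_sub_distrib, ← Finset.sum_add_distrib, Finset.mul_sum]
      exact Finset.sum_congr rfl fun k _ => by ring
    rw [h, sub_self] at e
    have : 0 < ∑ k, m k * x k ^ 2 + ∑ k, m k * y k ^ 2 := by
      rcases hxy with h | h
      · linarith [hpos x h, hnn y]
      · linarith [hpos y h, hnn x]
    exact (mul_eq_zero.1 e.symm).resolve_right this.ne'
  have hμr : μ = (μ.re : ℂ) := Complex.ext (by simp) (by simp [hb])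
  have hr1 : μ.re ≠ 1 := by
    intro h; apply hμ1; rw [hμr, h]; simp
  have key : ∀ w : Fin n → ℝ, w ≠ 0 → (∀ k, J w k = μ.re * w k) → |μ.re| < 1 := by
    intro w hw hJw
    have e : ∑ k, m k * (w k * J w k) = μ.re * ∑ k, m k * w k ^ 2 := by
      rw [Finset.mul_sum]
      exact Finset.sum_congr rfl fun k _ => by rw [hJw]; ring
    have u := upper w
    have l := lower w hw
    have hp := hpos w hw
    rw [e] at u l
    rw [abs_lt]
    constructor
    · by_contra! h
      nlinarith
    · apply lt_of_le_of_ne _ hr1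
      by_contra! h
      nlinarith
  rw [hμr, Complex.norm_real, Real.norm_eq_abs]
  rcases hxy with h | h
  · exact key x h fun k => by rw [hJx, hb]; ring
  · exact key y h fun k => by rw [hJy, hb]; ring

lemma radius_nonneg {n : ℕ} (M : Matrix (Fin n) (Fin n) ℝ) : 0 ≤ secondEigRadius M := by
  apply Real.sSup_nonneg
  rintro r ⟨μ, -, -, rfl⟩
  exact norm_nonneg _

lemma radius_finite {n : ℕ} (M : Matrix (Fin n) (Fin n) ℝ) :
    {r : ℝ | ∃ μ : ℂ, μ ∈ spectrum ℂ (M.map (Complex.ofReal)) ∧ μ ≠ 1 ∧ r = ‖μ‖}.Finite := by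
  have hf : (spectrum ℂ (M.map (Complex.ofReal))).Finite := by
    rw [← Matrix.spectrum_toLin']
    exact Module.End.finite_spectrum _
  apply (hf.image fun μ => ‖μ‖).subset
  rintro r ⟨μ, h, -, rfl⟩
  exact ⟨μ, h, rfl⟩

lemma le_radius {n : ℕ} (M : Matrix (Fin n) (Fin n) ℝ) (μ : ℂ)
    (h : μ ∈ spectrum ℂ (M.map (Complex.ofReal))) (h1 : μ ≠ 1) : ‖μ‖ ≤ secondEigRadius M :=
  le_csSup (radius_finite M).bddAbove ⟨μ, h, h1, rfl⟩

lemma radius_lt {n : ℕ} (M : Matrix (Fin n) (Fin n) ℝ)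
    (h : ∀ μ : ℂ, μ ∈ spectrum ℂ (M.map (Complex.ofReal)) → μ ≠ 1 → ‖μ‖ < 1) :
    secondEigRadius M < 1 := by
  unfold secondEigRadius
  rcases Set.eq_empty_or_nonempty
    {r : ℝ | ∃ μ : ℂ, μ ∈ spectrum ℂ (M.map (Complex.ofReal)) ∧ μ ≠ 1 ∧ r = ‖μ‖} with he | hne
  · rw [he, Real.sSup_empty]; exact one_pos
  · obtain ⟨μ, h1, h2, h3⟩ := hne.csSup_mem (radius_finite M)
    rw [h3]
    exact h μ h1 h2

lemma contraction {n : ℕ} (m : Fin n → ℝ) (hm : ∀ k, 0 < m k)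
    (J : (Fin n → ℝ) →ₗ[ℝ] (Fin n → ℝ))
    (symm : ∀ d e : Fin n → ℝ, ∑ k, m k * (e k * J d k) = ∑ k, m k * (d k * J e k))
    (upeq : ∀ d : Fin n → ℝ, ∑ k, m k * (d k * J d k) = ∑ k, m k * d k ^ 2 → ∃ c, ∀ i, d i = c)
    (d : Fin n → ℝ) (hd : ∑ k, m k * d k = 0) :
    ∑ k, m k * J d k ^ 2 ≤ secondEigRadius (LinearMap.toMatrix' J) ^ 2 * ∑ k, m k * d k ^ 2 := by
  obtain ⟨s, hs⟩ : ∃ s : Fin n → ℝ, ∀ k, s k = √(m k) := ⟨_, fun _ => rfl⟩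
  have hs0 : ∀ k, 0 < s k := fun k => by rw [hs]; exact Real.sqrt_pos.2 (hm k)
  have hss : ∀ k, s k * s k = m k := fun k => by rw [hs]; exact Real.mul_self_sqrt (hm k).le
  let T : EuclideanSpace ℝ (Fin n) →ₗ[ℝ] EuclideanSpace ℝ (Fin n) :=
    { toFun := fun x => WithLp.toLp 2 fun k => s k * J (fun l => x l / s l) k
      map_add' := by
        intro x y
        have : (fun l => (x + y) l / s l) = (fun l => x l / s l) + fun l => y l / s l := by
          ext l; simp [add_div]
        rw [this, map_add]
        ext k
        simp [mul_add]
      map_smul' := by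
        intro c x
        have : (fun l => (c • x) l / s l) = c • (fun l => x l / s l) := by
          ext l; simp [mul_div_assoc]
        rw [this, map_smul]
        ext k
        simp
        ring }
  have hTk : ∀ x k, T x k = s k * J (fun l => x l / s l) k := fun x k => rfl
  have hin : ∀ x y : EuclideanSpace ℝ (Fin n), inner ℝ x y = ∑ k, x k * y k := by
    intro x y
    rw [PiLp.inner_apply]
    exact Finset.sum_congr rfl fun k _ => by simp [mul_comm]
  have hT : T.IsSymmetric := by
    intro x y
    rw [hin, hin]
    have h := symm (fun l => x l / s l) (fun l => y l / s l)
    convert h using 2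
    · rename_i k _
      rw [hTk, ← hss k]
      have := (hs0 k).ne'
      field_simp
    · rename_i k _
      rw [hTk, ← hss k]
      have := (hs0 k).ne'
      field_simp
  have hfr : Module.finrank ℝ (EuclideanSpace ℝ (Fin n)) = n := by simp
  set b := hT.eigenvectorBasis hfr with hb
  set lam := hT.eigenvalues hfr with hlam
  have hbe : ∀ i, T (b i) = lam i • b i := fun i => hT.apply_eigenvectorBasis hfr i
  obtain ⟨X, hX⟩ : ∃ X : EuclideanSpace ℝ (Fin n), ∀ k, X k = s k * d k :=
    ⟨WithLp.toLp 2 fun k => s k * d k, fun _ => rfl⟩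
  have hTX : ∀ k, T X k = s k * J d k := by
    intro k
    have e0 : (fun l => X l / s l) = d := by
      ext l
      rw [hX]
      have := (hs0 l).ne'
      field_simp
    rw [hTk, e0]
  have n1 : ‖T X‖ ^ 2 = ∑ k, m k * J d k ^ 2 := by
    rw [EuclideanSpace.real_norm_sq_eq]
    exact Finset.sum_congr rfl fun k _ => by rw [hTX, ← hss k]; ring
  have n2 : ‖X‖ ^ 2 = ∑ k, m k * d k ^ 2 := by
    rw [EuclideanSpace.real_norm_sq_eq]
    exact Finset.sum_congr rfl fun k _ => by rw [hX, ← hss k]; ring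
  rw [← n1, ← n2, ← b.sum_sq_norm_inner_right (T X), ← b.sum_sq_norm_inner_right X,
    Finset.mul_sum]
  apply Finset.sum_le_sum
  intro i _
  have h1 : inner ℝ (b i) (T X) = lam i * inner ℝ (b i) X := by
    rw [← hT (b i) X, hbe, real_inner_smul_left]
  rw [h1, norm_mul, mul_pow]
  obtain ⟨e, he⟩ : ∃ e : Fin n → ℝ, ∀ k, e k = b i k / s k := ⟨_, fun _ => rfl⟩
  have hef : e = fun k => b i k / s k := funext he
  have hJe : ∀ k, J e k = lam i * e k := by
    intro k
    have h := congrArg (fun x : EuclideanSpace ℝ (Fin n) => x k) (hbe i)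
    simp only [hTk, ← hef, PiLp.smul_apply, smul_eq_mul] at h
    rw [he]
    have := (hs0 k).ne'
    field_simp
    linarith
  by_cases hl : lam i = 1
  · have h2 : ∑ k, m k * (e k * J e k) = ∑ k, m k * e k ^ 2 :=
      Finset.sum_congr rfl fun k _ => by rw [hJe, hl]; ring
    obtain ⟨c, hc⟩ := upeq e h2
    have h3 : inner ℝ (b i) X = 0 := by
      rw [hin]
      have : ∀ k, b i k * X k = c * (m k * d k) := by
        intro k
        have h4 : b i k = c * s k := by
          rw [← hc k, he]
          have := (hs0 k).ne'
          field_simp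
        rw [h4, hX, ← hss k]; ring
      simp_rw [this, ← Finset.mul_sum, hd, mul_zero]
    rw [h3]; simp
  · apply mul_le_mul_of_nonneg_right _ (sq_nonneg _)
    apply pow_le_pow_left₀ (norm_nonneg _)
    rw [← Complex.norm_real]
    apply le_radius
    · rw [mem_spec]
      refine ⟨fun k => (e k : ℂ), ?_, ?_⟩
      · intro h0
        apply b.orthonormal.ne_zero i
        ext k
        have h5 : e k = 0 := by
          have := congrFun h0 k
          simpa using this
        rw [he] at h5
        simpa [(hs0 k).ne'] using h5
      · ext k
        have h6 : J e = LinearMap.toMatrix' J *ᵥ e := (LinearMap.toMatrix'_mulVec J e).symm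
        have h7 := hJe k
        rw [h6] at h7
        simp only [Matrix.mulVec, dotProduct] at h7
        simp only [Matrix.mulVec, dotProduct, Matrix.map_apply, Pi.smul_apply, smul_eq_mul]
        exact_mod_cast h7
    · exact_mod_cast hl

/-- Local linear convergence for a translation-equivariant map. -/
lemma local_conv {n : ℕ} (F : (Fin n → ℝ) → (Fin n → ℝ)) (hFc : Continuous F) (ps : Fin n → ℝ)
    (hps : F ps = ps) (J : (Fin n → ℝ) →L[ℝ] (Fin n → ℝ)) (hJ : HasFDerivAt F J ps)
    (hshift : ∀ p (c : ℝ), F (p + fun _ => c) = F p + fun _ => c)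
    (m : Fin n → ℝ) (hm : ∀ k, 0 < m k)
    (hJm : ∀ d, ∑ k, m k * J d k = ∑ k, m k * d k) (ρ : ℝ) (hρ0 : 0 ≤ ρ) (hρ1 : ρ < 1)
    (hcontr : ∀ d : Fin n → ℝ, ∑ k, m k * d k = 0 →
      ∑ k, m k * J d k ^ 2 ≤ ρ ^ 2 * ∑ k, m k * d k ^ 2)
    (i0 : Fin n) (x : ℕ → Fin n → ℝ) (hx : ∀ k, x (k + 1) = F (x k))
    (hglob : Tendsto (fun k => x k + fun _ => -(x k i0)) atTop (nhds (ps + fun _ => -(ps i0)))) :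
    ∃ pbar, F pbar = pbar ∧ Tendsto x atTop (nhds pbar) ∧
      ∀ r, ρ < r → r < 1 → ∃ C, 0 < C ∧ ∀ᶠ k in atTop, ‖x k - pbar‖ ≤ C * r ^ k := by
  have hM : 0 < ∑ k, m k := Finset.sum_pos (fun k _ => hm k) ⟨i0, Finset.mem_univ _⟩
  -- the projection
  let Pl : (Fin n → ℝ) →ₗ[ℝ] (Fin n → ℝ) :=
    { toFun := fun d => d + fun _ => -((∑ k, m k * d k) / ∑ k, m k)
      map_add' := by
        intro a b; ext i
        simp [mul_add, Finset.sum_add_distrib, add_div]; ring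
      map_smul' := by
        intro c a; ext i
        have : ∑ k, m k * (c * a k) = c * ∑ k, m k * a k := by
          rw [Finset.mul_sum]; exact Finset.sum_congr rfl fun k _ => by ring
        simp [this]; ring }
  let Ll : (Fin n → ℝ) →ₗ[ℝ] EuclideanSpace ℝ (Fin n) :=
    { toFun := fun d => WithLp.toLp 2 fun k => √(m k) * d k
      map_add' := by intro a b; ext i; simp [mul_add]
      map_smul' := by intro c a; ext i; simp; ring }
  let P : (Fin n → ℝ) →L[ℝ] (Fin n → ℝ) := LinearMap.toContinuousLinearMap Pl
  let L : (Fin n → ℝ) →L[ℝ] EuclideanSpace ℝ (Fin n) := LinearMap.toContinuousLinearMap Ll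
  have hPd : ∀ d, P d = d + fun _ => -((∑ k, m k * d k) / ∑ k, m k) := fun d => rfl
  have hLd : ∀ d k, L d k = √(m k) * d k := fun d k => rfl
  have hLn : ∀ d, ‖L d‖ ^ 2 = ∑ k, m k * d k ^ 2 := by
    intro d
    rw [EuclideanSpace.real_norm_sq_eq]
    exact Finset.sum_congr rfl fun k _ => by
      rw [hLd, mul_pow, Real.sq_sqrt (hm k).le]
  have hPc : ∀ c : ℝ, P (fun _ => c) = 0 := by
    intro c
    rw [hPd]; ext i
    simp [← Finset.sum_mul]
    field_simp
    ring
  have hPm : ∀ d, ∑ k, m k * P d k = 0 := by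
    intro d
    have : ∀ k, m k * P d k = m k * d k - ((∑ k, m k * d k) / ∑ k, m k) * m k := by
      intro k; rw [hPd]; simp; ring
    simp_rw [this]
    rw [Finset.sum_sub_distrib, ← Finset.mul_sum]
    field_simp
    ring
  have hP0 : ∀ d, ∑ k, m k * d k = 0 → P d = d := by
    intro d hd
    rw [hPd, hd]; ext i; simp
  have hcontrL : ∀ d : Fin n → ℝ, ∑ k, m k * d k = 0 → ‖L (J d)‖ ≤ ρ * ‖L d‖ := by
    intro d hd
    apply le_of_sq_le_sq _ (by positivity)
    rw [mul_pow, hLn, hLn]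
    exact hcontr d hd
  obtain ⟨K, hK0, hK⟩ : ∃ K : ℝ, 0 < K ∧ ∀ d, ‖d‖ ≤ K * ‖L d‖ := by
    have hker : LinearMap.ker Ll = ⊥ := by
      rw [LinearMap.ker_eq_bot']
      intro d hd
      ext k
      have : √(m k) * d k = 0 := by
        have := congrArg (fun y : EuclideanSpace ℝ (Fin n) => y k) hd
        exact this
      exact (mul_eq_zero.1 this).resolve_left (Real.sqrt_pos.2 (hm k)).ne'
    obtain ⟨K, hK0, hK⟩ := LinearMap.exists_antilipschitzWith Ll hker
    refine ⟨K, by exact_mod_cast hK0, fun d => ?_⟩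
    have := hK.le_mul_dist d 0
    rw [map_zero, dist_zero_right, dist_zero_right] at this
    exact this
  set w : ℕ → Fin n → ℝ := fun k => P (x k - ps) with hw
  have hw0 : Tendsto w atTop (nhds 0) := by
    have h1 : Tendsto (fun k => P ((x k + fun _ => -(x k i0)) - ps)) atTop
        (nhds (P ((ps + fun _ => -(ps i0)) - ps))) :=
      (P.continuous.tendsto _).comp (hglob.sub_const ps)
    have e1 : P ((ps + fun _ => -(ps i0)) - ps) = 0 := by
      rw [add_sub_cancel_left, hPc]
    rw [e1] at h1
    refine h1.congr fun k => ?_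
    have e2 : (x k + fun _ => -(x k i0)) - ps = (x k - ps) + fun _ => -(x k i0) := by abel
    rw [e2, map_add, hPc, add_zero]
  have hxw : ∀ k, ∃ c : ℝ, x k = (ps + w k) + fun _ => c := by
    intro k
    refine ⟨(∑ i, m i * (x k - ps) i) / ∑ i, m i, ?_⟩
    simp only [hw]
    rw [hPd]
    ext i
    simp only [Pi.add_apply, Pi.sub_apply]
    ring
  have hmw : ∀ k, ∑ i, m i * w k i = 0 := fun k => hPm _
  have hwstep : ∀ k, w (k + 1) = J (w k) + P (F (ps + w k) - F ps - J (w k)) := by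
    intro k
    obtain ⟨c, hc⟩ := hxw k
    have e1 : P (J (w k)) = J (w k) := hP0 _ (by rw [hJm]; exact hmw k)
    have e2 : w (k + 1) = P (F (ps + w k) - ps) := by
      have : w (k + 1) = P (x (k + 1) - ps) := rfl
      rw [this, hx, hc, hshift]
      have e3 : F (ps + w k) + (fun _ => c) - ps = (F (ps + w k) - ps) + fun _ => c := by abel
      rw [e3, map_add, hPc, add_zero]
    rw [e2, map_sub P _ (J (w k)), e1, hps]
    abel
  have hxstep : ∀ k, x (k + 1) - x k
      = J (w k) + (F (ps + w k) - F ps - J (w k)) - w k := by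
    intro k
    obtain ⟨c, hc⟩ := hxw k
    rw [hx]
    have : F (x k) = F (ps + w k) + fun _ => c := by rw [hc, hshift]
    rw [this, hps]
    ext i
    have hci := congrFun hc i
    simp only [Pi.add_apply, Pi.sub_apply] at hci ⊢
    linarith
  have hlit : ∀ ε, 0 < ε → ∀ᶠ k in atTop, ‖F (ps + w k) - F ps - J (w k)‖ ≤ ε * ‖w k‖ := by
    intro ε hε
    have h := hasFDerivAt_iff_isLittleO_nhds_zero.1 hJ
    exact hw0.eventually (h.def hε)
  have main : ∀ r, ρ < r → r < 1 → ∃ N C, 0 < C ∧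
      ∀ j, dist (x (j + N)) (x (j + 1 + N)) ≤ C * r ^ j := by
    intro r hr hr1
    set Q := ‖L.comp P‖ with hQ
    have hQ0 : 0 ≤ Q := norm_nonneg _
    set ε := (r - ρ) / (Q * K + 1) with hε
    have hε0 : 0 < ε := div_pos (by linarith) (by positivity)
    have hεe : ε * (Q * K + 1) = r - ρ := by
      rw [hε]; field_simp
    obtain ⟨N, hN⟩ := eventually_atTop.1 (hlit ε hε0)
    have hdec : ∀ k, N ≤ k → ‖L (w (k + 1))‖ ≤ r * ‖L (w k)‖ := by
      intro k hk
      have h1 := hN k hk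
      set o := F (ps + w k) - F ps - J (w k) with ho
      rw [hwstep, ← ho, map_add]
      have h2 : ‖L (P o)‖ ≤ Q * ‖o‖ := (L.comp P).le_opNorm o
      have h3 := hcontrL (w k) (hmw k)
      have h4 := hK (w k)
      have h5 : ‖L (P o)‖ ≤ (r - ρ) * ‖L (w k)‖ := by
        calc ‖L (P o)‖ ≤ Q * ‖o‖ := h2
          _ ≤ Q * (ε * (K * ‖L (w k)‖)) := by gcongr; exact h1.trans (by gcongr)
          _ = (ε * (Q * K)) * ‖L (w k)‖ := by ring
          _ ≤ (ε * (Q * K + 1)) * ‖L (w k)‖ := by gcongr; linarith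
          _ = _ := by rw [hεe]
      calc ‖L (J (w k)) + L (P o)‖ ≤ ‖L (J (w k))‖ + ‖L (P o)‖ := norm_add_le _ _
        _ ≤ r * ‖L (w k)‖ := by linarith
    have hgeo : ∀ j, ‖L (w (j + N))‖ ≤ ‖L (w N)‖ * r ^ j := by
      intro j
      induction j with
      | zero => simp
      | succ j ih =>
        have h1 := hdec (j + N) (by omega)
        have e : j + 1 + N = j + N + 1 := by omega
        rw [e]
        calc _ ≤ r * ‖L (w (j + N))‖ := h1
          _ ≤ r * (‖L (w N)‖ * r ^ j) := by
            apply mul_le_mul_of_nonneg_left ih; linarith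
          _ = _ := by ring
    refine ⟨N, (‖J‖ + ε + 1) * K * ‖L (w N)‖ + 1, by positivity, fun j => ?_⟩
    have hr0 : 0 ≤ r := by linarith
    have h1 := hN (j + N) (by omega)
    have e : j + 1 + N = j + N + 1 := by omega
    rw [e, dist_comm, dist_eq_norm, hxstep]
    calc _ ≤ ‖J (w (j + N))‖ + ‖F (ps + w (j + N)) - F ps - J (w (j + N))‖ + ‖w (j + N)‖ :=
          (norm_sub_le _ _).trans (by gcongr; exact norm_add_le _ _)
      _ ≤ ‖J‖ * ‖w (j + N)‖ + ε * ‖w (j + N)‖ + ‖w (j + N)‖ := by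
          gcongr; exact J.le_opNorm _
      _ = (‖J‖ + ε + 1) * ‖w (j + N)‖ := by ring
      _ ≤ (‖J‖ + ε + 1) * (K * (‖L (w N)‖ * r ^ j)) := by
          gcongr
          exact (hK _).trans (by gcongr; exact hgeo j)
      _ = ((‖J‖ + ε + 1) * K * ‖L (w N)‖) * r ^ j := by ring
      _ ≤ _ := by gcongr; linarith
  obtain ⟨N, C, hC, hd⟩ := main ((ρ + 1) / 2) (by linarith) (by linarith)
  have hcau : CauchySeq fun j => x (j + N) :=
    cauchySeq_of_le_geometric ((ρ + 1) / 2) C (by linarith) hd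
  obtain ⟨pbar, hpbar⟩ := cauchySeq_tendsto_of_complete hcau
  have hlim : Tendsto x atTop (nhds pbar) := (tendsto_add_atTop_iff_nat N).1 hpbar
  refine ⟨pbar, ?_, hlim, ?_⟩
  · have h1 : Tendsto (fun k => x (k + 1)) atTop (nhds pbar) :=
      hlim.comp (tendsto_add_atTop_nat 1)
    have h2 : Tendsto (fun k => F (x k)) atTop (nhds (F pbar)) := (hFc.tendsto _).comp hlim
    simp_rw [hx] at h1
    exact tendsto_nhds_unique h2 h1
  · intro r hr hr1
    have hr0 : 0 < r := by linarith
    obtain ⟨N, C, hC, hd⟩ := main r hr hr1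
    have h1r : 0 < 1 - r := by linarith
    refine ⟨C / (1 - r) / r ^ N, by positivity, ?_⟩
    rw [eventually_atTop]
    refine ⟨N, fun k hk => ?_⟩
    obtain ⟨j, rfl⟩ := Nat.exists_eq_add_of_le' hk
    have h3 := dist_le_of_le_geometric_of_tendsto r C hr1 hd
      ((tendsto_add_atTop_iff_nat (f := x) N).2 hlim) j
    rw [dist_eq_norm] at h3
    refine h3.trans (le_of_eq ?_)
    rw [pow_add]
    field_simp

lemma limsup_root {u : ℕ → ℝ} (hu : ∀ k, 0 ≤ u k) (ρ : ℝ) (hρ0 : 0 ≤ ρ) (hρ1 : ρ < 1)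
    (h : ∀ r, ρ < r → r < 1 → ∃ C, 0 < C ∧ ∀ᶠ k in atTop, u k ≤ C * r ^ k) :
    limsup (fun k : ℕ => u k ^ (1 / (k : ℝ))) atTop ≤ ρ := by
  apply le_of_forall_gt_imp_ge_of_dense
  intro r' hr'
  obtain ⟨r, hr, hrm⟩ := exists_between (lt_min hr' hρ1)
  have hr1 : r < 1 := hrm.trans_le (min_le_right _ _)
  have hrr' : r < r' := hrm.trans_le (min_le_left _ _)
  obtain ⟨C, hC, hk⟩ := h r hr hr1
  have hr0 : 0 < r := by linarith
  have hlim : Tendsto (fun k : ℕ => C ^ (1 / (k : ℝ)) * r) atTop (nhds r) := by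
    have h1 : Tendsto (fun k : ℕ => C ^ (1 / (k : ℝ))) atTop (nhds (C ^ (0 : ℝ))) :=
      tendsto_const_nhds.rpow tendsto_one_div_atTop_nhds_zero_nat (Or.inl hC.ne')
    rw [Real.rpow_zero] at h1
    simpa using h1.mul_const r
  have hle : (fun k : ℕ => u k ^ (1 / (k : ℝ))) ≤ᶠ[atTop] fun k : ℕ => C ^ (1 / (k : ℝ)) * r := by
    filter_upwards [hk, eventually_gt_atTop 0] with k h1 h2
    have h3 : u k ^ (1 / (k : ℝ)) ≤ (C * r ^ k) ^ (1 / (k : ℝ)) :=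
      Real.rpow_le_rpow (hu k) h1 (by positivity)
    refine h3.trans (le_of_eq ?_)
    rw [Real.mul_rpow hC.le (by positivity), one_div, Real.pow_rpow_inv_natCast hr0.le h2.ne']
  have h4 := limsup_le_limsup hle
    (isCoboundedUnder_le_of_le atTop (x := 0) fun k => Real.rpow_nonneg (hu k) _)
    hlim.isBoundedUnder_le
  rw [hlim.limsup_eq] at h4
  exact h4.trans hrr'.le

lemma exp_rate {n : ℕ} {x : ℕ → Fin n → ℝ} {pbar : Fin n → ℝ} (hx : Tendsto x atTop (nhds pbar)) :
    ∃ K, 0 < K ∧ ∀ᶠ k in atTop,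
      ‖(fun i => Real.exp (x k i)) - fun i => Real.exp (pbar i)‖ ≤ K * ‖x k - pbar‖ := by
  have hd : DifferentiableAt ℝ (fun (p : Fin n → ℝ) i => Real.exp (p i)) pbar := by fun_prop
  have hO := hd.isBigO_sub.comp_tendsto hx
  obtain ⟨K, hK, h⟩ := hO.exists_pos
  exact ⟨K, hK, h.bound⟩

end EffHots

/-- Convergence of the effective HOTS algorithm: if a feasible flow with the pattern of `A'`
exists, `F` has a fixed point, unique up to additive constants, and the fixed point iteration
converges linearly at rate `ρ = |λ₂(∇F(p*))| < 1`; consequently the HOTS vectors `e^{pᵏ}`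
converge linearly at rate `ρ` to a HOTS vector, unique up to a multiplicative constant. -/
theorem effHots_converges {n : ℕ} (A : Matrix (Fin n) (Fin n) ℝ)
    (hA : ∀ i j, 0 ≤ A i j) (hA0 : A ≠ 0) (α : ℝ) (hα₁ : 1 / 2 < α) (hα₂ : α < 1)
    (hfeas : ∃ ρ : Matrix (Fin (n + 1)) (Fin (n + 1)) ℝ, FeasibleFlow A α ρ) :
    ∃ pstar : Fin n → ℝ, effHotsMap A α pstar = pstar ∧
      (∀ q : Fin n → ℝ, effHotsMap A α q = q → ∃ c : ℝ, q = pstar + fun _ => c) ∧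
      secondEigRadius (jacMatrix (effHotsMap A α) pstar) < 1 ∧
      ∀ p0 : Fin n → ℝ, ∃ pbar : Fin n → ℝ, effHotsMap A α pbar = pbar ∧
        Tendsto (fun k => (effHotsMap A α)^[k] p0) atTop (nhds pbar) ∧
        limsup (fun k : ℕ => ‖(effHotsMap A α)^[k] p0 - pbar‖ ^ (1 / (k : ℝ))) atTop ≤
          secondEigRadius (jacMatrix (effHotsMap A α) pstar) ∧
        limsup (fun k : ℕ =>
            ‖(fun i => Real.exp ((effHotsMap A α)^[k] p0 i)) - fun i => Real.exp (pbar i)‖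
              ^ (1 / (k : ℝ))) atTop ≤
          secondEigRadius (jacMatrix (effHotsMap A α) pstar) := by
  obtain ⟨ps, hps⟩ := EffHots.exists_fixed hA hA0 hα₁ hα₂ hfeas
  obtain ⟨symm, upper, upeq, lower⟩ := EffHots.jac_facts hA hA0 hα₁ hα₂ ps hps
  have hm : ∀ k, 0 < EffHots.UU A α ps k := fun k => EffHots.UU_pos hA hA0 hα₁ hα₂ ps k
  have hρ1 : secondEigRadius (jacMatrix (effHotsMap A α) ps) < 1 :=
    EffHots.radius_lt _ (EffHots.spec_real (EffHots.UU A α ps) hm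
      (fderiv ℝ (effHotsMap A α) ps : (Fin n → ℝ) →ₗ[ℝ] (Fin n → ℝ)) symm upper lower)
  have hρ0 : 0 ≤ secondEigRadius (jacMatrix (effHotsMap A α) ps) := EffHots.radius_nonneg _
  refine ⟨ps, hps, fun q hq => EffHots.unique hA hA0 hα₁ hα₂ ps q hps hq, hρ1, fun p0 => ?_⟩
  have hdiff := EffHots.map_differentiable hA hA0 hα₁ hα₂
  obtain ⟨i0⟩ := EffHots.nonempty_fin hA0
  have hJm : ∀ d, ∑ k, EffHots.UU A α ps k * fderiv ℝ (effHotsMap A α) ps d k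
      = ∑ k, EffHots.UU A α ps k * d k := by
    intro d
    have h := symm d (fun _ => 1)
    rw [EffHots.jac_one hA hA0 hα₁ hα₂] at h
    simpa using h
  obtain ⟨pbar, hfix, hlim, hrate⟩ := EffHots.local_conv (effHotsMap A α) hdiff.continuous ps hps
    (fderiv ℝ (effHotsMap A α) ps) (hdiff ps).hasFDerivAt
    (EffHots.map_shift hA hA0 hα₁ hα₂) (EffHots.UU A α ps) hm hJm
    (secondEigRadius (jacMatrix (effHotsMap A α) ps)) hρ0 hρ1
    (fun d hd => EffHots.contraction (EffHots.UU A α ps) hm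
      (fderiv ℝ (effHotsMap A α) ps : (Fin n → ℝ) →ₗ[ℝ] (Fin n → ℝ)) symm upeq d hd)
    i0 (fun k => (effHotsMap A α)^[k] p0) (fun k => Function.iterate_succ_apply' _ _ _)
    (EffHots.global_conv hA hA0 hα₁ hα₂ hfeas ps hps i0 p0)
  refine ⟨pbar, hfix, hlim, ?_, ?_⟩
  · exact EffHots.limsup_root (fun k => norm_nonneg _) _ hρ0 hρ1 hrate
  · refine EffHots.limsup_root (fun k => norm_nonneg _) _ hρ0 hρ1 fun r hr hr1 => ?_
    obtain ⟨C, hC, h⟩ := hrate r hr hr1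
    obtain ⟨K, hK, h'⟩ := EffHots.exp_rate hlim
    refine ⟨K * C, mul_pos hK hC, ?_⟩
    filter_upwards [h, h'] with k h1 h2
    calc _ ≤ _ := h2
      _ ≤ K * (C * r ^ k) := mul_le_mul_of_nonneg_left h1 hK.le
      _ = _ := by ring
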